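/- arXiv:2507.14012 — 2 statements merged into one kernel-verified Lean document; each statement's English description precedes it below -/
import Mathlib

section
/- Let Δ ⊂ ℝ³ be a tetrahedron of unit volume. Then for every ℓ > 0 and every Borel set Ω ⊂ ℝ³ of finite measure and finite perimeter, Per(Ω) = ∫_G Per(Ω ∩ gℓΔ) dg/ℓ³ − Per(Δ) |Ω|/ℓ. -/
/-!
Averaging over rotations is harmless because every rotation `R` gives the same value: for an open
set `K` of finite volume and finite perimeter,
`∫ Per(Ω ∩ (τ + K)) dτ = Per(Ω) |K| + |Ω| Per(K)`, and for `K = ℓ • RΔ` the right-hand side is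
`ℓ³ |Δ| Per(Ω) + ℓ² Per(Δ) |Ω|`.

For the upper bound, mollify both indicator functions to `u` and `v`; the product rule
`|∇(u v(· - τ))| ≤ |∇u| |v(· - τ)| + |u| |∇v(· - τ)|` integrates over `τ` by Tonelli, and the
variation is lower semicontinuous under `L¹` convergence.

For the lower bound, take fields `ψ` and `N` almost optimal for `Ω` and `K`, and a cutoff `χ`
supported in `K` and equal to one on a large compact subset. The field
`χ(· - τ) ψ + (1 - χ(· - τ)) N(· - τ)` is admissible for `Ω ∩ (τ + K)`; after integration over `τ`
the terms containing `∇χ` have total weight `∫ ∇χ = 0` or collapse to the divergence theorem.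

A convex open set of finite volume has finite perimeter because a small translate of it stays
inside a slightly dilated copy, which bounds the difference quotients of `∫_K f` under translations
of `K`.
-/

open MeasureTheory Metric Set Filter Bornology
open scoped Topology ENNReal NNReal Pointwise

noncomputable section

/-- Three-dimensional Euclidean space. -/
abbrev E3 : Type := EuclideanSpace ℝ (Fin 3)

/-- The divergence of a vector field on `E3`, defined as the trace of its derivative. -/
def divg (φ : E3 → E3) (x : E3) : ℝ :=
  LinearMap.trace ℝ E3 (fderiv ℝ φ x : E3 →ₗ[ℝ] E3)

/-- The candidate values `∫_Ω div φ` over `C¹` compactly supported vector fields bounded by one. -/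
def perCand (Ω : Set E3) : Set ℝ :=
  {a : ℝ | ∃ φ : E3 → E3, ContDiff ℝ 1 φ ∧ HasCompactSupport φ ∧
      (∀ x, ‖φ x‖ ≤ 1) ∧ a = ∫ x in Ω, divg φ x}

/-- The perimeter of a set, in the sense of geometric measure theory. -/
def per (Ω : Set E3) : ℝ := sSup (perCand Ω)

/-- A set has finite perimeter if the family of integrals defining the perimeter is
bounded above. -/
def HasFinPer (Ω : Set E3) : Prop := BddAbove (perCand Ω)

/-- The Lebesgue volume of a set as a real number. -/
def vol (Ω : Set E3) : ℝ := (volume Ω).toReal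

/-- The liquid drop energy `𝓔_Λ[ρ,Ω]`. -/
def ldEnergy (Λ : Set E3) (ρ : ℝ) (Ω : Set E3) : ℝ :=
  per Ω + (1/2) * ∫ x, ∫ y,
    (Set.indicator Ω (fun _ => (1:ℝ)) x - ρ * Set.indicator Λ (fun _ => (1:ℝ)) x) *
      (Set.indicator Ω (fun _ => (1:ℝ)) y - ρ * Set.indicator Λ (fun _ => (1:ℝ)) y) / ‖x - y‖

/-- The neutral ground state energy `E_Λ(ρ)`. -/
def EE (Λ : Set E3) (ρ : ℝ) : ℝ :=
  sInf {t : ℝ | ∃ Ω : Set E3, MeasurableSet Ω ∧ Ω ⊆ Λ ∧ HasFinPer Ω ∧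
    vol Ω = ρ * vol Λ ∧ t = ldEnergy Λ ρ Ω}

/-- The liquid drop energy `I[Ω]` of an isolated droplet (no background). -/
def II (Ω : Set E3) : ℝ :=
  per Ω + (1/2) * ∫ x in Ω, ∫ y in Ω, 1 / ‖x - y‖

/-- `μ* = inf I[Ω]/|Ω|`. -/
def muStar : ℝ :=
  sInf {t : ℝ | ∃ Ω : Set E3, MeasurableSet Ω ∧ HasFinPer Ω ∧
    0 < volume Ω ∧ volume Ω < ⊤ ∧ t = II Ω / vol Ω}

/-- A minimizer for the isolated liquid drop problem. -/
def IsMinimizer (Ω : Set E3) : Prop :=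
  MeasurableSet Ω ∧ HasFinPer Ω ∧ 0 < volume Ω ∧ volume Ω < ⊤ ∧ II Ω = muStar * vol Ω

/-- The set of masses of minimizers. -/
def minimizerMasses : Set ℝ := {m : ℝ | ∃ Ω : Set E3, IsMinimizer Ω ∧ m = vol Ω}

/-- The largest mass of a minimizer. -/
def mStar : ℝ := sSup minimizerMasses

/-- The smallest mass of a minimizer. -/
def mStarStar : ℝ := sInf minimizerMasses

/-- `Λ` is an `(r,L)`-Lipschitz open set: near each boundary point it is, in a suitable
orthonormal coordinate system, the epigraph of an `L`-Lipschitz function. -/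
def IsLipschitzDomain (r L : ℝ) (Λ : Set E3) : Prop :=
  ∀ x ∈ frontier Λ, ∃ (g : E3 ≃ᵢ E3) (f : ℝ × ℝ → ℝ),
    LipschitzWith L.toNNReal f ∧
    Λ ∩ ball x r = {y ∈ ball x r | f (g y 0, g y 1) < g y 2}

/-- Fisher regularity of the boundary. -/
def FisherCond (C ℓ : ℝ) (Λ : Set E3) : Prop :=
  ∀ h : ℝ, 0 < h → h ≤ ℓ → (volume (frontier Λ + ball (0:E3) h)).toReal ≤ C * ℓ^2 * h

/-- An admissible sequence of domains for the thermodynamic limit. -/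
def IsAdmissibleSeq (r L C : ℝ) (Λs : ℕ → Set E3) (ℓ : ℕ → ℝ) : Prop :=
  Tendsto ℓ atTop atTop ∧
  ∀ n : ℕ, IsOpen (Λs n) ∧ IsBounded (Λs n) ∧ IsLipschitzDomain r L (Λs n) ∧
    ball 0 (ℓ n / C) ⊆ Λs n ∧ Λs n ⊆ ball 0 (ℓ n) ∧ FisherCond C (ℓ n) (Λs n)

/-- `e` is the thermodynamic limit function of the liquid drop model. -/
def IsThermoLimit (e : ℝ → ℝ) : Prop :=
  ∀ ρ : ℝ, 0 ≤ ρ → ρ ≤ 1 →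
    ∀ (r L C : ℝ) (Λs : ℕ → Set E3) (ℓ : ℕ → ℝ), 0 < r → 0 < L → 0 < C →
      IsAdmissibleSeq r L C Λs ℓ →
      Tendsto (fun n => EE (Λs n) ρ / vol (Λs n)) atTop (𝓝 (e ρ))

/-- The domain for the `N`-particle Jellium problem: `N^{1/3} Λ₁` with `Λ₁` the ball of
unit volume centered at the origin. -/
def jelDomain (N : ℕ) : Set E3 :=
  ball (0:E3) ((N : ℝ) ^ ((1:ℝ)/3) * (3 / (4 * Real.pi)) ^ ((1:ℝ)/3))

/-- The `N`-particle Jellium ground state energy. -/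
def jelN (N : ℕ) : ℝ :=
  sInf {t : ℝ | ∃ x : Fin N → E3, (∀ j, x j ∈ jelDomain N) ∧
    t = (∑ j : Fin N, ∑ k : Fin N, if j < k then 1 / ‖x j - x k‖ else 0)
      - (∑ j : Fin N, ∫ y in jelDomain N, 1 / ‖x j - y‖)
      + (1/2) * ∫ x' in jelDomain N, ∫ y in jelDomain N, 1 / ‖x' - y‖}

/-- `eJ` is the Jellium energy per particle in the thermodynamic limit. -/
def IsJelliumLimit (eJ : ℝ) : Prop :=
  Tendsto (fun N : ℕ => jelN N / (N : ℝ)) atTop (𝓝 eJ)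

/-- The grand-canonical liquid drop energy `F_Λ(ρ)`. -/
def FF (Λ : Set E3) (ρ : ℝ) : ℝ :=
  sInf {t : ℝ | ∃ Ω : Set E3, MeasurableSet Ω ∧ Ω ⊆ Λ ∧ HasFinPer Ω ∧
    t = ldEnergy Λ ρ Ω - muStar * vol Ω}

/-- A tetrahedron: the interior of the convex hull of four affinely independent points. -/
def IsTetra (Δ : Set E3) : Prop :=
  ∃ v : Fin 4 → E3, AffineIndependent ℝ v ∧ Δ = interior (convexHull ℝ (Set.range v))

/-- The open cube `(-L/2, L/2)³`. -/
def cubeL (Lside : ℝ) : Set E3 := {x : E3 | ∀ i, |x i| < Lside / 2}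

/-- The grand-canonical Jellium energy of point particles of charge `m` in the domain `S`
with a uniform background of density one. -/
def pointJellium (m : ℝ) (S : Set E3) : ℝ :=
  sInf {t : ℝ | ∃ (n : ℕ) (x : Fin n → E3), (∀ j, x j ∈ S) ∧
    t = (∑ j : Fin n, ∑ k : Fin n, if j < k then m^2 / ‖x j - x k‖ else 0)
      - m * (∑ j : Fin n, ∫ y in S, 1 / ‖x j - y‖)
      + (1/2) * ∫ x' in S, ∫ y in S, 1 / ‖x' - y‖}

/-- The conclusions of the decomposition theorem for minimizing sequences. -/
def IsDecomp (Ω : ℕ → Set E3) (m : ℝ) (K : ℕ) (Ωs : Fin K → Set E3)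
    (a : ℕ → Fin K → E3) (R : ℝ) (φ : ℕ → ℕ) : Prop :=
  StrictMono φ ∧ 0 < R ∧
  (∀ j k : Fin K, j ≠ k → Tendsto (fun n => ‖a n j - a n k‖) atTop atTop) ∧
  (∀ j, IsMinimizer (Ωs j)) ∧
  (∀ j, mStarStar ≤ vol (Ωs j) ∧ vol (Ωs j) ≤ mStar) ∧
  (∀ j, Tendsto
    (fun n => volume (symmDiff ({x : E3 | x + a n j ∈ Ω (φ n)} ∩ ball (0:E3) R) (Ωs j)))
    atTop (𝓝 0)) ∧
  Tendsto (fun n => volume (Ω (φ n) \ ⋃ j, ball (a n j) R)) atTop (𝓝 0) ∧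
  Tendsto (fun n => per (Ω (φ n) \ ⋃ j, ball (a n j) R)) atTop (𝓝 0) ∧
  m = ∑ j, vol (Ωs j) ∧
  (2 ≤ K → ∃ ε : ℕ → ℝ, Tendsto ε atTop (𝓝 0) ∧ ∀ n : ℕ,
    muStar * vol (Ω (φ n)) +
      (∑ j : Fin K, ∑ k : Fin K,
        if j < k then (vol (Ωs j) * vol (Ωs k) + ε n) / ‖a n j - a n k‖ else 0)
      ≤ II (Ω (φ n)))

instance : MeasurableSpace (Matrix (Fin 3) (Fin 3) ℝ) :=
  (inferInstance : MeasurableSpace (Fin 3 → Fin 3 → ℝ))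

/-- The rotation group SO(3), as a set of matrices. -/
def SO3 : Set (Matrix (Fin 3) (Fin 3) ℝ) := {R | R * R.transpose = 1 ∧ R.det = 1}

/-- The action of a matrix on Euclidean space. -/
def rot (R : Matrix (Fin 3) (Fin 3) ℝ) (x : E3) : E3 :=
  (EuclideanSpace.equiv (Fin 3) ℝ).symm (R.mulVec (EuclideanSpace.equiv (Fin 3) ℝ x))

/-- The image of a set under the rigid motion `x ↦ Rx + τ`. -/
def rigidImage (R : Matrix (Fin 3) (Fin 3) ℝ) (τ : E3) (S : Set E3) : Set E3 :=
  (fun x => rot R x + τ) '' S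

/-- `μ` is the normalized Haar measure of SO(3): a probability measure concentrated on SO(3)
which is invariant under left multiplication by rotations. -/
def IsHaarSO3 (μ : Measure (Matrix (Fin 3) (Fin 3) ℝ)) : Prop :=
  IsProbabilityMeasure μ ∧ μ SO3ᶜ = 0 ∧ ∀ S ∈ SO3, Measure.map (fun R => S * R) μ = μ

/-- The cube of the tiling of side length `ε` indexed by `z ∈ ℤ³`. -/
def cubeZ (ε : ℝ) (z : Fin 3 → ℤ) : Set E3 := {x : E3 | ∀ i, |x i - ε * (z i : ℝ)| < ε / 2}

/-- The distance between two sets. -/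
def setDist (s t : Set E3) : ℝ := sInf {d : ℝ | ∃ p ∈ s, ∃ q ∈ t, d = dist p q}

/-- The outer cubic boundary layer of `Λ` at scale `ε`. -/
def outerLayer (Λ : Set E3) (ε : ℝ) : Set E3 :=
  ⋃ z ∈ {z : Fin 3 → ℤ | setDist (cubeZ ε z) (frontier Λ) ≤ ε}, closure (cubeZ ε z \ Λ)

open scoped Convolution Manifold

theorem exists_contDiff_cutoff {E : Type*} [NormedAddCommGroup E] [NormedSpace ℝ E]
    [FiniteDimensional ℝ E] {C K : Set E} (hC : IsCompact C) (hK : IsOpen K) (hCK : C ⊆ K) :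
    ∃ χ : E → ℝ, ContDiff ℝ 1 χ ∧ HasCompactSupport χ ∧ tsupport χ ⊆ K ∧
      (∀ x, χ x ∈ Icc 0 1) ∧ ∀ x ∈ C, χ x = 1 := by
  obtain ⟨L, hL, hCL, hLK⟩ := exists_compact_between hC hK hCK
  obtain ⟨χ, hχC, hχL, hχ⟩ := exists_contMDiffMap_one_nhds_of_subset_interior 𝓘(ℝ, E) (n := 1)
    hC.isClosed hCL
  have hts : tsupport χ ⊆ L :=
    closure_minimal (fun x hx => not_imp_comm.1 (hχL x) hx) hL.isClosed
  exact ⟨χ, χ.contMDiff.contDiff, hL.of_isClosed_subset (isClosed_tsupport _) hts,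
    hts.trans hLK, hχ, fun x hx => hχC.self_of_nhdsSet x hx⟩

theorem ofReal_integral_le_lintegral_ofReal {α : Type*} [MeasurableSpace α]
    {ν : Measure α} (f : α → ℝ) :
    ENNReal.ofReal (∫ x, f x ∂ν) ≤ ∫⁻ x, ENNReal.ofReal (f x) ∂ν := by
  by_cases hf : Integrable f ν
  · rw [integral_eq_lintegral_pos_part_sub_lintegral_neg_part hf]
    exact (ENNReal.ofReal_le_ofReal (sub_le_self _ ENNReal.toReal_nonneg)).trans
      ENNReal.ofReal_toReal_le
  · simp [integral_undef hf]

theorem measure_le_ofReal_integral {X : Type*} [MeasurableSpace X] {μ : Measure X} {χ : X → ℝ}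
    {C : Set X} (hC : MeasurableSet C) (hχi : Integrable χ μ) (hχ0 : 0 ≤ χ)
    (hχC : ∀ x ∈ C, χ x = 1) : μ C ≤ ENNReal.ofReal (∫ x, χ x ∂μ) := by
  rw [ofReal_integral_eq_lintegral_ofReal hχi (.of_forall hχ0), ← lintegral_indicator_one hC]
  refine lintegral_mono fun x => ?_
  by_cases hx : x ∈ C
  · simp [hx, hχC x hx]
  · simp [hx]

theorem mem_vadd_set_iff_sub_mem {G : Type*} [AddCommGroup G] {K : Set G} {τ x : G} :
    x ∈ τ +ᵥ K ↔ x - τ ∈ K := by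
  rw [mem_vadd_set_iff_neg_vadd_mem, vadd_eq_add, neg_add_eq_sub]

theorem lintegral_lintegral_mul_sub {G : Type*} [AddGroup G] [MeasurableSpace G]
    [MeasurableAdd₂ G] [MeasurableNeg G] {μ : Measure G} [SFinite μ] [μ.IsAddLeftInvariant]
    [μ.IsNegInvariant] {f g : G → ℝ≥0∞} (hf : Measurable f) (hg : Measurable g) :
    ∫⁻ τ, ∫⁻ x, f x * g (x - τ) ∂μ ∂μ = (∫⁻ x, f x ∂μ) * ∫⁻ x, g x ∂μ := by
  rw [lintegral_lintegral_swap (by fun_prop), ← lintegral_mul_const _ hf]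
  refine lintegral_congr fun x => ?_
  rw [lintegral_const_mul _ (by fun_prop), lintegral_sub_left_eq_self g x]

theorem setIntegral_vadd {G F : Type*} [AddGroup G] [MeasurableSpace G] [MeasurableAdd G]
    [NormedAddCommGroup F] [NormedSpace ℝ F] {μ : Measure G} [μ.IsAddLeftInvariant] (f : G → F)
    (K : Set G) (τ : G) :
    ∫ x in τ +ᵥ K, f x ∂μ = ∫ x in K, f (τ + x) ∂μ :=
  (measurePreserving_vadd τ μ).setIntegral_image_emb (measurableEmbedding_const_vadd τ) f K

section Calculus

variable {E F F₁ F₂ : Type*}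
  [NormedAddCommGroup E] [NormedSpace ℝ E] [FiniteDimensional ℝ E] [MeasurableSpace E]
  [BorelSpace E] [NormedAddCommGroup F] [NormedSpace ℝ F]
  [NormedAddCommGroup F₁] [NormedSpace ℝ F₁] [NormedAddCommGroup F₂] [NormedSpace ℝ F₂]
  {μ : Measure E} [μ.IsAddHaarMeasure]

theorem integral_fderiv_apply_eq_zero {f : E → F} (hf : ContDiff ℝ 1 f)
    (hc : HasCompactSupport f) (v : E) : ∫ x, fderiv ℝ f x v ∂μ = 0 := by
  have hf' : Continuous fun x => fderiv ℝ f x v := (hf.continuous_fderiv one_ne_zero).clm_apply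
    continuous_const
  have hi : Integrable (fun x => fderiv ℝ f x v) μ := hf'.integrable_of_hasCompactSupport
    (hc.fderiv_apply ℝ v)
  have := integral_smul_fderiv_eq_neg_fderiv_smul_of_integrable (μ := μ)
    (f := fun _ : E => (1 : ℝ)) (g := f) (v := v) (by simp) (by simpa using hi)
    (by simpa using hf.continuous.integrable_of_hasCompactSupport hc)
    (by simp) (fun x _ => hf.differentiable one_ne_zero x)
  simpa using this

theorem integral_fderiv_eq_zero {f : E → F} (hf : ContDiff ℝ 1 f) (hc : HasCompactSupport f) :
    ∫ x, fderiv ℝ f x ∂μ = 0 := by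
  have hi : Integrable (fderiv ℝ f) μ :=
    (hf.continuous_fderiv one_ne_zero).integrable_of_hasCompactSupport (hc.fderiv ℝ)
  ext v
  rw [ContinuousLinearMap.integral_apply hi, integral_fderiv_apply_eq_zero hf hc]
  rfl

variable (L : F₁ →L[ℝ] F₂ →L[ℝ] F) {f : E → F₁} {g : E → F₂}

theorem ae_integrable_correlation (hf : Integrable f μ) (hg : Integrable g μ) :
    ∀ᵐ τ ∂μ, Integrable (fun x => L (f x) (g (x - τ))) μ := by
  filter_upwards [hf.ae_convolution_exists L hg.comp_neg] with τ hτ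
  simpa [ConvolutionExistsAt] using hτ

theorem integrable_correlation (hf : Integrable f μ) (hg : Integrable g μ) :
    Integrable (fun τ => ∫ x, L (f x) (g (x - τ)) ∂μ) μ := by
  refine (hf.integrable_convolution L hg.comp_neg).congr (Eventually.of_forall fun τ => ?_)
  simp [convolution_def]

theorem integral_correlation [CompleteSpace F] [CompleteSpace F₁] [CompleteSpace F₂]
    (hf : Integrable f μ) (hg : Integrable g μ) :
    ∫ τ, ∫ x, L (f x) (g (x - τ)) ∂μ ∂μ = L (∫ x, f x ∂μ) (∫ x, g x ∂μ) := by
  simpa [convolution_def, integral_neg_eq_self] using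
    integral_convolution (μ := μ) (ν := μ) L hf hg.comp_neg

theorem continuous_setIntegral_vadd {f : E → F} (hf : Integrable f μ) (K : Set E) :
    Continuous fun τ : E => ∫ x in τ +ᵥ K, f x ∂μ := by
  have hf1 : MemLp f 1 μ := memLp_one_iff_integrable.2 hf
  have : Fact ((1 : ℝ≥0∞) ≠ ∞) := ⟨ENNReal.one_ne_top⟩
  have hcont : Continuous fun τ : E => DomAddAct.mk τ +ᵥ hf1.toLp f :=
    DomAddAct.continuous_mk.vadd continuous_const
  refine ((continuous_setIntegral K).comp hcont).congr fun τ => ?_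
  rw [setIntegral_vadd]
  refine integral_congr_ae (ae_restrict_of_ae ?_)
  simp only [DomAddAct.mk_vadd_toLp]
  exact MemLp.coeFn_toLp _

end Calculus

section Divergence

/-- The trace on endomorphisms of `E3` as a continuous linear functional, so that the
divergence is its composition with `fderiv`. -/
def traceCLM : (E3 →L[ℝ] E3) →L[ℝ] ℝ :=
  LinearMap.toContinuousLinearMap
    (LinearMap.trace ℝ E3 ∘ₗ ContinuousLinearMap.coeLM ℝ)

theorem divg_eq_traceCLM (φ : E3 → E3) : divg φ = fun x => traceCLM (fderiv ℝ φ x) := rfl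

theorem traceCLM_smulRight (f : E3 →L[ℝ] ℝ) (v : E3) : traceCLM (f.smulRight v) = f v :=
  LinearMap.trace_smulRight (f : E3 →ₗ[ℝ] ℝ) v

theorem divg_eq_sum (φ : E3 → E3) (x : E3) :
    divg φ x = ∑ i, fderiv ℝ φ x (EuclideanSpace.basisFun (Fin 3) ℝ i) i := by
  rw [divg, LinearMap.trace_eq_matrix_trace ℝ (EuclideanSpace.basisFun (Fin 3) ℝ).toBasis]
  simp [Matrix.trace, LinearMap.toMatrix_apply]

variable {φ ψ : E3 → E3} {f : E3 → ℝ}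

theorem continuous_divg (hφ : ContDiff ℝ 1 φ) : Continuous (divg φ) :=
  traceCLM.continuous.comp (hφ.continuous_fderiv one_ne_zero)

theorem hasCompactSupport_divg (hφ : HasCompactSupport φ) : HasCompactSupport (divg φ) :=
  (hφ.fderiv ℝ).comp_left (map_zero traceCLM)

theorem integrable_divg (hφ : ContDiff ℝ 1 φ) (hc : HasCompactSupport φ) : Integrable (divg φ) :=
  (continuous_divg hφ).integrable_of_hasCompactSupport (hasCompactSupport_divg hc)

theorem divg_zero : divg 0 = 0 := by
  ext x
  simp [divg_eq_traceCLM]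

theorem divg_add {x : E3} (hφ : DifferentiableAt ℝ φ x) (hψ : DifferentiableAt ℝ ψ x) :
    divg (φ + ψ) x = divg φ x + divg ψ x := by
  simp only [divg_eq_traceCLM, fderiv_add hφ hψ, map_add]

theorem divg_smul {x : E3} (hf : DifferentiableAt ℝ f x) (hφ : DifferentiableAt ℝ φ x) :
    divg (f • φ) x = f x * divg φ x + fderiv ℝ f x (φ x) := by
  simp only [divg_eq_traceCLM, fderiv_smul hf hφ, map_add, map_smul, traceCLM_smulRight,
    smul_eq_mul]

theorem divg_comp_sub (φ : E3 → E3) (τ x : E3) :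
    divg (fun y => φ (y - τ)) x = divg φ (x - τ) := by
  simp only [divg_eq_traceCLM, fderiv_comp_sub]

theorem integral_divg_eq_zero (hφ : ContDiff ℝ 1 φ) (hc : HasCompactSupport φ) :
    ∫ x, divg φ x = 0 := by
  have hi : Integrable (fderiv ℝ φ) :=
    (hφ.continuous_fderiv one_ne_zero).integrable_of_hasCompactSupport (hc.fderiv ℝ)
  rw [divg_eq_traceCLM, traceCLM.integral_comp_comm hi, integral_fderiv_eq_zero hφ hc, map_zero]

theorem integral_mul_divg (hf : ContDiff ℝ 1 f) (hφ : ContDiff ℝ 1 φ)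
    (hc : HasCompactSupport φ) :
    ∫ x, f x * divg φ x = -∫ x, fderiv ℝ f x (φ x) := by
  have hdiv : Integrable fun x => f x * divg φ x :=
    (hf.continuous.mul (continuous_divg hφ)).integrable_of_hasCompactSupport
      (hasCompactSupport_divg hc).mul_left
  have hder : Integrable fun x => fderiv ℝ f x (φ x) :=
    ((hf.continuous_fderiv one_ne_zero).clm_apply hφ.continuous).integrable_of_hasCompactSupport
      (hc.mono fun x hx => by contrapose! hx; simp_all)
  rw [eq_neg_iff_add_eq_zero, ← integral_add hdiv hder,
    ← integral_divg_eq_zero (hf.smul hφ) hc.smul_left]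
  exact integral_congr_ae (Eventually.of_forall fun x =>
    (divg_smul (hf.differentiable one_ne_zero x) (hφ.differentiable one_ne_zero x)).symm)

end Divergence

section Variation

/-- The `C¹` compactly supported vector fields bounded by one, over which the perimeter is
computed. -/
structure IsTestField (φ : E3 → E3) : Prop where
  contDiff : ContDiff ℝ 1 φ
  hasCompactSupport : HasCompactSupport φ
  norm_le_one : ∀ x, ‖φ x‖ ≤ 1

/-- The total variation of a function on `E3`, with values in `[0, ∞]`. -/
def eVariation (w : E3 → ℝ) : ℝ≥0∞ :=
  ⨆ (φ : E3 → E3) (_ : IsTestField φ), ENNReal.ofReal (∫ x, w x * divg φ x)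

/-- The perimeter with values in `[0, ∞]`, so that it is `∞`, rather than the junk value `0` of
`per`, for sets of infinite perimeter. -/
def ePer (Ω : Set E3) : ℝ≥0∞ :=
  ⨆ (φ : E3 → E3) (_ : IsTestField φ), ENNReal.ofReal (∫ x in Ω, divg φ x)

variable {φ : E3 → E3} {w : E3 → ℝ} {Ω : Set E3}

theorem isTestField_zero : IsTestField 0 :=
  ⟨contDiff_const, HasCompactSupport.zero, by simp⟩

namespace IsTestField

theorem comp_sub (hφ : IsTestField φ) (τ : E3) : IsTestField fun x => φ (x - τ) :=
  ⟨hφ.contDiff.comp (contDiff_id.sub contDiff_const),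
    hφ.hasCompactSupport.comp_homeomorph (Homeomorph.subRight τ), fun _ => hφ.norm_le_one _⟩

theorem integrable_divg (hφ : IsTestField φ) : Integrable (divg φ) :=
  _root_.integrable_divg hφ.contDiff hφ.hasCompactSupport

theorem exists_abs_divg_le (hφ : IsTestField φ) : ∃ C, ∀ x, ‖divg φ x‖ ≤ C :=
  (hasCompactSupport_divg hφ.hasCompactSupport).exists_bound_of_continuous
    (continuous_divg hφ.contDiff)

theorem ofReal_integral_mul_divg_le_eVariation (hφ : IsTestField φ) (w : E3 → ℝ) :
    ENNReal.ofReal (∫ x, w x * divg φ x) ≤ eVariation w :=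
  le_iSup₂_of_le φ hφ le_rfl

theorem ofReal_setIntegral_divg_le_ePer (hφ : IsTestField φ) (Ω : Set E3) :
    ENNReal.ofReal (∫ x in Ω, divg φ x) ≤ ePer Ω :=
  le_iSup₂_of_le φ hφ le_rfl

end IsTestField

theorem mem_perCand_iff {a : ℝ} :
    a ∈ perCand Ω ↔ ∃ φ, IsTestField φ ∧ a = ∫ x in Ω, divg φ x :=
  ⟨fun ⟨φ, h₁, h₂, h₃, ha⟩ => ⟨φ, ⟨h₁, h₂, h₃⟩, ha⟩,
    fun ⟨φ, ⟨h₁, h₂, h₃⟩, ha⟩ => ⟨φ, h₁, h₂, h₃, ha⟩⟩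

theorem zero_mem_perCand (Ω : Set E3) : (0 : ℝ) ∈ perCand Ω :=
  mem_perCand_iff.2 ⟨0, isTestField_zero, by simp [divg_zero]⟩

theorem hasFinPer_iff_ePer_ne_top : HasFinPer Ω ↔ ePer Ω ≠ ∞ := by
  constructor
  · rintro ⟨C, hC⟩
    refine ne_top_of_le_ne_top (ENNReal.ofReal_ne_top (r := C)) (iSup₂_le fun φ hφ => ?_)
    exact ENNReal.ofReal_le_ofReal (hC (mem_perCand_iff.2 ⟨φ, hφ, rfl⟩))
  · refine fun h => ⟨(ePer Ω).toReal, fun a ha => ?_⟩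
    obtain ⟨φ, hφ, rfl⟩ := mem_perCand_iff.1 ha
    exact (ENNReal.ofReal_le_iff_le_toReal h).1 (hφ.ofReal_setIntegral_divg_le_ePer Ω)

theorem per_eq_toReal_ePer (Ω : Set E3) : per Ω = (ePer Ω).toReal := by
  by_cases h : HasFinPer Ω
  · have hne := hasFinPer_iff_ePer_ne_top.1 h
    refine le_antisymm (csSup_le ⟨0, zero_mem_perCand Ω⟩ fun a ha => ?_)
      (ENNReal.toReal_le_of_le_ofReal (le_csSup h (zero_mem_perCand Ω))
        (iSup₂_le fun φ hφ => ENNReal.ofReal_le_ofReal ?_))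
    · obtain ⟨φ, hφ, rfl⟩ := mem_perCand_iff.1 ha
      exact (ENNReal.ofReal_le_iff_le_toReal hne).1 (hφ.ofReal_setIntegral_divg_le_ePer Ω)
    · exact le_csSup h (mem_perCand_iff.2 ⟨φ, hφ, rfl⟩)
  · have htop : ePer Ω = ∞ := not_not.1 fun hne => h (hasFinPer_iff_ePer_ne_top.2 hne)
    rw [htop, ENNReal.toReal_top, per, Real.sSup_of_not_bddAbove h]

theorem ePer_eq_eVariation_indicator (hΩ : MeasurableSet Ω) :
    ePer Ω = eVariation (Ω.indicator 1) := by
  have h (φ : E3 → E3) : ∫ x, Ω.indicator 1 x * divg φ x = ∫ x in Ω, divg φ x := by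
    rw [← integral_indicator hΩ]
    simp [← indicator_mul_left]
  simp only [ePer, eVariation, h]

theorem eVariation_le_liminf {u : ℕ → E3 → ℝ} {C : ℝ}
    (hu : ∀ n, AEStronglyMeasurable (u n)) (hC : ∀ n x, |u n x| ≤ C)
    (hlim : ∀ᵐ x, Tendsto (fun n => u n x) atTop (𝓝 (w x))) :
    eVariation w ≤ liminf (fun n => eVariation (u n)) atTop := by
  refine iSup₂_le fun φ hφ => ?_
  have hφlim : Tendsto (fun n => ∫ x, u n x * divg φ x) atTop (𝓝 (∫ x, w x * divg φ x)) := by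
    refine tendsto_integral_of_dominated_convergence (fun x => C * ‖divg φ x‖)
      (fun n => (hu n).mul hφ.integrable_divg.aestronglyMeasurable)
      (hφ.integrable_divg.norm.const_mul C) (fun n => .of_forall fun x => ?_) ?_
    · rw [norm_mul]
      exact mul_le_mul_of_nonneg_right (hC n x) (norm_nonneg _)
    · filter_upwards [hlim] with x hx using hx.mul_const _
  rw [← (ENNReal.tendsto_ofReal hφlim).liminf_eq]
  exact liminf_le_liminf (.of_forall fun n => hφ.ofReal_integral_mul_divg_le_eVariation (u n))

theorem eVariation_le_lintegral_enorm_fderiv (hw : ContDiff ℝ 1 w) :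
    eVariation w ≤ ∫⁻ x, ‖fderiv ℝ w x‖ₑ := by
  refine iSup₂_le fun φ hφ => ?_
  rw [integral_mul_divg hw hφ.contDiff hφ.hasCompactSupport, ← integral_neg]
  refine (ofReal_integral_le_lintegral_ofReal _).trans (lintegral_mono fun x => ?_)
  rw [← ofReal_norm]
  refine ENNReal.ofReal_le_ofReal ((neg_le_abs _).trans ?_)
  exact (fderiv ℝ w x).le_of_opNorm_le_of_le le_rfl (hφ.norm_le_one x) |>.trans_eq (mul_one _)

theorem eVariation_convolution_le {ρ : E3 → ℝ} (hρ : Integrable ρ) (hρ0 : ∀ x, 0 ≤ ρ x)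
    (hρ1 : ∫ x, ρ x = 1) (hw : Integrable w) :
    eVariation (ρ ⋆[ContinuousLinearMap.lsmul ℝ ℝ, volume] w) ≤ eVariation w := by
  refine iSup₂_le fun φ hφ => ?_
  obtain ⟨C, hC⟩ := hφ.exists_abs_divg_le
  have hint : Integrable (fun p : E3 × E3 => (ρ p.2 * w (p.1 - p.2)) * divg φ p.1)
      (volume.prod volume) :=
    (hρ.convolution_integrand (ContinuousLinearMap.lsmul ℝ ℝ) hw).mul_bdd (c := C)
      ((continuous_divg hφ.contDiff).comp continuous_fst).aestronglyMeasurable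
      (.of_forall fun p => hC _)
  have hshift (t : E3) :
      ENNReal.ofReal (∫ x, w (x - t) * divg φ x) ≤ eVariation w := by
    refine le_of_eq_of_le ?_ ((hφ.comp_sub (-t)).ofReal_integral_mul_divg_le_eVariation w)
    rw [← integral_sub_right_eq_self (fun x => w x * divg (fun y => φ (y - -t)) x) t]
    simp only [divg_comp_sub]
    simp only [sub_neg_eq_add, sub_add_cancel]
  calc ENNReal.ofReal (∫ x, (ρ ⋆[ContinuousLinearMap.lsmul ℝ ℝ, volume] w) x * divg φ x)
      = ENNReal.ofReal (∫ t, ρ t * ∫ x, w (x - t) * divg φ x) := by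
        simp only [convolution_def, ContinuousLinearMap.lsmul_apply, smul_eq_mul,
          ← integral_mul_const, ← integral_const_mul, ← mul_assoc]
        rw [integral_integral_swap hint]
    _ ≤ ∫⁻ t, ENNReal.ofReal (ρ t) * eVariation w := by
        refine (ofReal_integral_le_lintegral_ofReal _).trans (lintegral_mono fun t => ?_)
        rw [ENNReal.ofReal_mul (hρ0 t)]
        gcongr
        exact hshift t
    _ = eVariation w := by
        rw [lintegral_mul_const'' _ hρ.aestronglyMeasurable.aemeasurable.ennreal_ofReal,
          ← ofReal_integral_eq_lintegral_ofReal hρ (.of_forall hρ0), hρ1, ENNReal.ofReal_one,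
          one_mul]

end Variation

section RegularizedUnit

variable {E : Type*} [NormedAddCommGroup E] [InnerProductSpace ℝ E] {ε : ℝ}

/-- A smooth substitute for the direction `v / ‖v‖` of `v`, recovered as `ε → 0`. -/
def regularizedUnit (ε : ℝ) (v : E) : E := (√(‖v‖ ^ 2 + ε))⁻¹ • v

theorem contDiff_regularizedUnit (hε : 0 < ε) {n : WithTop ℕ∞} :
    ContDiff ℝ n (regularizedUnit ε : E → E) := by
  have hpos (v : E) : 0 < ‖v‖ ^ 2 + ε := by positivity
  exact ((((contDiff_norm_sq ℝ).add contDiff_const).sqrt fun v => (hpos v).ne').inv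
    fun v => (Real.sqrt_pos.2 (hpos v)).ne').smul contDiff_id

theorem norm_regularizedUnit_le_one (hε : 0 ≤ ε) (v : E) : ‖regularizedUnit ε v‖ ≤ 1 := by
  rw [regularizedUnit, norm_smul, norm_inv, Real.norm_of_nonneg (Real.sqrt_nonneg _)]
  exact inv_mul_le_one_of_le₀ (Real.le_sqrt_of_sq_le (by linarith)) (Real.sqrt_nonneg _)

theorem inner_regularizedUnit (ε : ℝ) (v : E) :
    inner ℝ v (regularizedUnit ε v) = (√(‖v‖ ^ 2 + ε))⁻¹ * ‖v‖ ^ 2 := by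
  rw [regularizedUnit, inner_smul_right, real_inner_self_eq_norm_sq]

theorem inner_regularizedUnit_nonneg (ε : ℝ) (v : E) : 0 ≤ inner ℝ v (regularizedUnit ε v) := by
  rw [inner_regularizedUnit]
  positivity

theorem tendsto_inner_regularizedUnit (v : E) :
    Tendsto (fun ε => inner ℝ v (regularizedUnit ε v)) (𝓝 0) (𝓝 ‖v‖) := by
  simp only [inner_regularizedUnit]
  obtain hv | hv := (norm_nonneg v).eq_or_lt
  · simp [← hv]
  · have hcont : ContinuousAt (fun ε => (√(‖v‖ ^ 2 + ε))⁻¹ * ‖v‖ ^ 2) 0 := by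
      refine ContinuousAt.mul (ContinuousAt.inv₀ (by fun_prop) ?_) continuousAt_const
      simpa using hv.ne'
    convert hcont.tendsto using 2
    rw [add_zero, Real.sqrt_sq hv.le]
    field_simp

end RegularizedUnit

section SmoothVariation

variable {w : E3 → ℝ}

theorem IsTestField.smul_regularizedUnit {η : E3 → ℝ} {G : E3 → E3} {ε : ℝ}
    (hη : ContDiff ℝ 1 η) (hηc : HasCompactSupport η) (hη1 : ∀ x, |η x| ≤ 1)
    (hG : ContDiff ℝ 1 G) (hε : 0 < ε) : IsTestField fun x => η x • regularizedUnit ε (G x) where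
  contDiff := hη.smul ((contDiff_regularizedUnit hε).comp hG)
  hasCompactSupport := hηc.smul_right
  norm_le_one x := by
    rw [norm_smul]
    exact mul_le_one₀ (hη1 x) (norm_nonneg _) (norm_regularizedUnit_le_one hε.le _)

open scoped Gradient in
theorem contDiff_gradient (hw : ContDiff ℝ 2 w) : ContDiff ℝ 1 (∇ w) :=
  (InnerProductSpace.toDual ℝ E3).symm.contDiff.comp (hw.fderiv_right (by norm_num))

open scoped Gradient in
theorem lintegral_regularized_gradient_le_eVariation (hw : ContDiff ℝ 2 w) {η : E3 → ℝ}
    (hη : ContDiff ℝ 1 η) (hηc : HasCompactSupport η) (hη01 : ∀ x, η x ∈ Icc 0 1)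
    {ε : ℝ} (hε : 0 < ε) :
    ∫⁻ x, ENNReal.ofReal (η x * inner ℝ (-∇ w x) (regularizedUnit ε (-∇ w x))) ≤
      eVariation w := by
  have hG : ContDiff ℝ 1 fun x => -∇ w x := (contDiff_gradient hw).neg
  have hφ : IsTestField fun x => η x • regularizedUnit ε (-∇ w x) :=
    .smul_regularizedUnit hη hηc (fun x => abs_le.2 ⟨by linarith [(hη01 x).1], (hη01 x).2⟩) hG hε
  have hint : Integrable fun x => η x * inner ℝ (-∇ w x) (regularizedUnit ε (-∇ w x)) :=
    (hη.continuous.mul (hG.continuous.inner ((contDiff_regularizedUnit (n := 0) hε).continuous.comp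
      hG.continuous))).integrable_of_hasCompactSupport hηc.mul_right
  rw [← ofReal_integral_eq_lintegral_ofReal hint (.of_forall fun x =>
    mul_nonneg (hη01 x).1 (inner_regularizedUnit_nonneg _ _))]
  convert hφ.ofReal_integral_mul_divg_le_eVariation w using 2
  rw [integral_mul_divg (hw.of_le (by norm_num)) hφ.contDiff hφ.hasCompactSupport, ← integral_neg]
  refine integral_congr_ae (.of_forall fun x => ?_)
  simp [gradient, InnerProductSpace.toDual_symm_apply]

open scoped Gradient in
theorem lintegral_enorm_fderiv_le_eVariation (hw : ContDiff ℝ 2 w) :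
    ∫⁻ x, ‖fderiv ℝ w x‖ₑ ≤ eVariation w := by
  let η (n : ℕ) : ContDiffBump (0 : E3) := ⟨n + 1, n + 2, by positivity, by linarith⟩
  let ε (n : ℕ) : ℝ := 1 / (n + 1)
  let f (n : ℕ) (x : E3) : ℝ := η n x * inner ℝ (-∇ w x) (regularizedUnit (ε n) (-∇ w x))
  have hε (n : ℕ) : 0 < ε n := Nat.one_div_pos_of_nat
  have hlim (x : E3) : Tendsto (fun n => f n x) atTop (𝓝 ‖fderiv ℝ w x‖) := by
    have hη : Tendsto (fun n => η n x) atTop (𝓝 1) := by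
      refine tendsto_const_nhds.congr' ?_
      filter_upwards [eventually_ge_atTop ⌈‖x‖⌉₊] with n hn
      refine ((η n).one_of_mem_closedBall ?_).symm
      simpa [η] using (Nat.ceil_le.1 hn).trans (by linarith)
    simpa [f, ε, gradient] using
      hη.mul ((tendsto_inner_regularizedUnit (-∇ w x)).comp tendsto_one_div_add_atTop_nhds_zero_nat)
  have hmeas (n : ℕ) : Measurable (f n) := by
    have hG := (contDiff_gradient hw).continuous.neg
    exact ((η n).continuous.mul (hG.inner
      ((contDiff_regularizedUnit (n := 0) (hε n)).continuous.comp hG))).measurable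
  calc ∫⁻ x, ‖fderiv ℝ w x‖ₑ = ∫⁻ x, liminf (fun n => ENNReal.ofReal (f n x)) atTop :=
        lintegral_congr fun x => by
          rw [(ENNReal.tendsto_ofReal (hlim x)).liminf_eq, ofReal_norm]
    _ ≤ liminf (fun n => ∫⁻ x, ENNReal.ofReal (f n x)) atTop :=
        lintegral_liminf_le fun n => (hmeas n).ennreal_ofReal
    _ ≤ liminf (fun _ : ℕ => eVariation w) atTop :=
        liminf_le_liminf (.of_forall fun n => lintegral_regularized_gradient_le_eVariation hw
          (η n).contDiff (η n).hasCompactSupport (fun x => ⟨(η n).nonneg, (η n).le_one⟩) (hε n))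
    _ = eVariation w := liminf_const _

end SmoothVariation

section Mollify

variable {w : E3 → ℝ}

/-- The bump functions at scale `1 / (n + 1)` with which functions on `E3` are mollified. -/
def mollifier (n : ℕ) : ContDiffBump (0 : E3) :=
  ⟨1 / (n + 1), 2 * (1 / (n + 1)), Nat.one_div_pos_of_nat, by
    linarith [Nat.one_div_pos_of_nat (α := ℝ) (n := n)]⟩

/-- The mollification of `w` at scale `1 / (n + 1)`. -/
def mollify (n : ℕ) (w : E3 → ℝ) : E3 → ℝ :=
  (mollifier n).normed volume ⋆[ContinuousLinearMap.lsmul ℝ ℝ, volume] w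

theorem contDiff_mollify (n : ℕ) (hw : LocallyIntegrable w) {k : ℕ∞} :
    ContDiff ℝ k (mollify n w) :=
  (mollifier n).hasCompactSupport_normed.contDiff_convolution_left _
    (mollifier n).contDiff_normed hw

theorem abs_mollify_le {C : ℝ} (hC : ∀ x, |w x| ≤ C) (n : ℕ) (x : E3) : |mollify n w x| ≤ C := by
  have hbound : ‖mollify n w x‖ ≤ ∫ t, (mollifier n).normed volume t * C := by
    refine norm_integral_le_of_norm_le ((mollifier n).integrable_normed.mul_const C)
      (.of_forall fun t => ?_)
    simp only [ContinuousLinearMap.lsmul_apply, smul_eq_mul, norm_mul,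
      Real.norm_of_nonneg ((mollifier n).nonneg_normed t)]
    exact mul_le_mul_of_nonneg_left (hC _) ((mollifier n).nonneg_normed t)
  rwa [integral_mul_const, (mollifier n).integral_normed, one_mul] at hbound

theorem norm_mollify_le (n : ℕ) (w : E3 → ℝ) (x : E3) :
    ‖mollify n w x‖ ≤ mollify n (fun y => ‖w y‖) x := by
  refine (norm_integral_le_integral_norm _).trans_eq (integral_congr_ae (.of_forall fun t => ?_))
  simp [(mollifier n).nonneg_normed t, abs_of_nonneg]

theorem lintegral_enorm_mollify_le (n : ℕ) (hw : Integrable w) :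
    ∫⁻ x, ‖mollify n w x‖ₑ ≤ ∫⁻ x, ‖w x‖ₑ := by
  have hint : Integrable (mollify n fun y => ‖w y‖) :=
    (mollifier n).integrable_normed.integrable_convolution _ hw.norm
  have hpos (x : E3) : 0 ≤ mollify n (fun y => ‖w y‖) x :=
    (norm_nonneg _).trans (norm_mollify_le n w x)
  calc ∫⁻ x, ‖mollify n w x‖ₑ ≤ ∫⁻ x, ENNReal.ofReal (mollify n (fun y => ‖w y‖) x) := by
        gcongr with x
        rw [← ofReal_norm]
        exact ENNReal.ofReal_le_ofReal (norm_mollify_le n w x)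
    _ = ENNReal.ofReal (∫ x, ‖w x‖) := by
        rw [← ofReal_integral_eq_lintegral_ofReal hint (.of_forall hpos), mollify,
          integral_convolution _ (mollifier n).integrable_normed hw.norm,
          (mollifier n).integral_normed, ContinuousLinearMap.lsmul_apply, one_smul]
    _ = ∫⁻ x, ‖w x‖ₑ := ofReal_integral_norm_eq_lintegral_enorm hw

theorem lintegral_enorm_fderiv_mollify_le (n : ℕ) (hw : Integrable w) :
    ∫⁻ x, ‖fderiv ℝ (mollify n w) x‖ₑ ≤ eVariation w :=
  (lintegral_enorm_fderiv_le_eVariation (contDiff_mollify n hw.locallyIntegrable)).trans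
    (eVariation_convolution_le (mollifier n).integrable_normed (mollifier n).nonneg_normed
      (mollifier n).integral_normed hw)

theorem ae_tendsto_mollify (hw : LocallyIntegrable w) :
    ∀ᵐ x, Tendsto (fun n => mollify n w x) atTop (𝓝 (w x)) := by
  refine ContDiffBump.ae_convolution_tendsto_right_of_locallyIntegrable (K := 2) ?_
    (.of_forall fun n => le_rfl) hw
  simpa [mollifier] using (tendsto_one_div_add_atTop_nhds_zero_nat (𝕜 := ℝ)).const_mul 2

end Mollify

section VariationOfProduct

variable {f g : E3 → ℝ}

theorem enorm_fderiv_mul_comp_sub_le (hf : ContDiff ℝ 1 f) (hg : ContDiff ℝ 1 g) (τ x : E3) :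
    ‖fderiv ℝ (fun y => f y * g (y - τ)) x‖ₑ ≤
      ‖fderiv ℝ f x‖ₑ * ‖g (x - τ)‖ₑ + ‖f x‖ₑ * ‖fderiv ℝ g (x - τ)‖ₑ := by
  have hgτ : DifferentiableAt ℝ (fun y => g (y - τ)) x :=
    (hg.differentiable one_ne_zero (x - τ)).comp x (differentiableAt_id.sub_const τ)
  rw [fderiv_fun_mul (hf.differentiable one_ne_zero x) hgτ, fderiv_comp_sub,
    mul_comm ‖fderiv ℝ f x‖ₑ, ← enorm_smul, ← enorm_smul, add_comm]
  exact enorm_add_le (g (x - τ) • fderiv ℝ f x) (f x • fderiv ℝ g (x - τ))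

theorem eVariation_mul_comp_sub_le (hf : ContDiff ℝ 1 f) (hg : ContDiff ℝ 1 g) (τ : E3) :
    eVariation (fun x => f x * g (x - τ)) ≤
      ∫⁻ x, ‖fderiv ℝ f x‖ₑ * ‖g (x - τ)‖ₑ + ‖f x‖ₑ * ‖fderiv ℝ g (x - τ)‖ₑ :=
  (eVariation_le_lintegral_enorm_fderiv
    (hf.mul (hg.comp (contDiff_id.sub contDiff_const)))).trans
      (lintegral_mono (enorm_fderiv_mul_comp_sub_le hf hg τ))

theorem eVariation_mul_comp_sub_le_liminf (hf : Integrable f) (hg : Integrable g) {A B : ℝ}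
    (hA : ∀ x, |f x| ≤ A) (hB : ∀ x, |g x| ≤ B) (τ : E3) :
    eVariation (fun x => f x * g (x - τ)) ≤
      liminf (fun n => eVariation fun x => mollify n f x * mollify n g (x - τ)) atTop := by
  have hg' : ∀ᵐ x, Tendsto (fun n => mollify n g (x - τ)) atTop (𝓝 (g (x - τ))) :=
    (measurePreserving_sub_right volume τ).quasiMeasurePreserving.ae
      (ae_tendsto_mollify hg.locallyIntegrable)
  refine eVariation_le_liminf (C := A * B) (fun n => ?_) (fun n x => ?_) ?_
  · have hfc := (contDiff_mollify n hf.locallyIntegrable (k := 0)).continuous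
    have hgc := (contDiff_mollify n hg.locallyIntegrable (k := 0)).continuous
    exact (hfc.mul (hgc.comp (continuous_sub_right τ))).aestronglyMeasurable
  · rw [abs_mul]
    exact mul_le_mul (abs_mollify_le hA n x) (abs_mollify_le hB n _) (abs_nonneg _)
      ((abs_nonneg _).trans (hA x))
  · filter_upwards [ae_tendsto_mollify hf.locallyIntegrable, hg'] with x hfx hgx
      using hfx.mul hgx

theorem measurable_lintegral_fderiv_mul_comp_sub (hf : ContDiff ℝ 1 f) (hg : ContDiff ℝ 1 g) :
    Measurable fun τ => ∫⁻ x, ‖fderiv ℝ f x‖ₑ * ‖g (x - τ)‖ₑ + ‖f x‖ₑ * ‖fderiv ℝ g (x - τ)‖ₑ := by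
  have hf' := (hf.continuous_fderiv one_ne_zero).measurable
  have hg' := (hg.continuous_fderiv one_ne_zero).measurable
  have hfm := hf.continuous.measurable
  have hgm := hg.continuous.measurable
  exact Measurable.lintegral_prod_right' (f := fun p : E3 × E3 =>
    ‖fderiv ℝ f p.2‖ₑ * ‖g (p.2 - p.1)‖ₑ + ‖f p.2‖ₑ * ‖fderiv ℝ g (p.2 - p.1)‖ₑ) (by fun_prop)

theorem lintegral_lintegral_fderiv_mul_comp_sub (hf : ContDiff ℝ 1 f) (hg : ContDiff ℝ 1 g) :
    ∫⁻ τ, ∫⁻ x, ‖fderiv ℝ f x‖ₑ * ‖g (x - τ)‖ₑ + ‖f x‖ₑ * ‖fderiv ℝ g (x - τ)‖ₑ =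
      (∫⁻ x, ‖fderiv ℝ f x‖ₑ) * (∫⁻ x, ‖g x‖ₑ) + (∫⁻ x, ‖f x‖ₑ) * ∫⁻ x, ‖fderiv ℝ g x‖ₑ := by
  have hf' := (hf.continuous_fderiv one_ne_zero).measurable
  have hg' := (hg.continuous_fderiv one_ne_zero).measurable
  have hfm := hf.continuous.measurable
  have hgm := hg.continuous.measurable
  rw [← lintegral_lintegral_mul_sub hf'.enorm hgm.enorm,
    ← lintegral_lintegral_mul_sub hfm.enorm hg'.enorm, ← lintegral_add_left]
  · exact lintegral_congr fun τ => lintegral_add_left (by fun_prop) _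
  · exact Measurable.lintegral_prod_right' (f := fun p : E3 × E3 =>
      ‖fderiv ℝ f p.2‖ₑ * ‖g (p.2 - p.1)‖ₑ) (by fun_prop)

theorem lintegral_eVariation_mul_comp_sub_le (hf : Integrable f) (hg : Integrable g) {A B : ℝ}
    (hA : ∀ x, |f x| ≤ A) (hB : ∀ x, |g x| ≤ B) :
    ∫⁻ τ, eVariation (fun x => f x * g (x - τ)) ≤
      eVariation f * (∫⁻ x, ‖g x‖ₑ) + (∫⁻ x, ‖f x‖ₑ) * eVariation g := by
  let u (n : ℕ) : E3 → ℝ := mollify n f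
  let v (n : ℕ) : E3 → ℝ := mollify n g
  have hu (n : ℕ) : ContDiff ℝ 1 (u n) := contDiff_mollify n hf.locallyIntegrable
  have hv (n : ℕ) : ContDiff ℝ 1 (v n) := contDiff_mollify n hg.locallyIntegrable
  let h (n : ℕ) (τ : E3) : ℝ≥0∞ :=
    ∫⁻ x, ‖fderiv ℝ (u n) x‖ₑ * ‖v n (x - τ)‖ₑ + ‖u n x‖ₑ * ‖fderiv ℝ (v n) (x - τ)‖ₑ
  have hh (n : ℕ) : ∫⁻ τ, h n τ ≤
      eVariation f * (∫⁻ x, ‖g x‖ₑ) + (∫⁻ x, ‖f x‖ₑ) * eVariation g := by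
    rw [lintegral_lintegral_fderiv_mul_comp_sub (hu n) (hv n)]
    exact add_le_add
      (mul_le_mul' (lintegral_enorm_fderiv_mollify_le n hf) (lintegral_enorm_mollify_le n hg))
      (mul_le_mul' (lintegral_enorm_mollify_le n hf) (lintegral_enorm_fderiv_mollify_le n hg))
  calc ∫⁻ τ, eVariation (fun x => f x * g (x - τ)) ≤ ∫⁻ τ, liminf (fun n => h n τ) atTop :=
        lintegral_mono fun τ => (eVariation_mul_comp_sub_le_liminf hf hg hA hB τ).trans
          (liminf_le_liminf (.of_forall fun n => eVariation_mul_comp_sub_le (hu n) (hv n) τ))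
    _ ≤ liminf (fun n => ∫⁻ τ, h n τ) atTop :=
        lintegral_liminf_le fun n => measurable_lintegral_fderiv_mul_comp_sub (hu n) (hv n)
    _ ≤ _ := (liminf_le_liminf (.of_forall hh)).trans_eq (liminf_const _)

end VariationOfProduct

section GluedField

/-- The field that equals `ψ` where `χ (· - τ) = 1` and the translate of `N` by `τ` where
`χ (· - τ) = 0`. With `χ` a cutoff supported in `K`, it competes for the perimeter of
`Ω ∩ (τ +ᵥ K)` when `ψ` does so for `Ω` and `N` for `K`. -/
def gluedField (χ : E3 → ℝ) (ψ N : E3 → E3) (τ : E3) : E3 → E3 :=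
  (fun x => χ (x - τ)) • ψ + fun x => ((1 - χ) • N) (x - τ)

variable {χ : E3 → ℝ} {ψ N : E3 → E3} {Ω K : Set E3}

theorem contDiff_one_sub_smul (hχ : ContDiff ℝ 1 χ) (hN : ContDiff ℝ 1 N) :
    ContDiff ℝ 1 ((1 - χ) • N) :=
  (contDiff_const.sub hχ).smul hN

theorem isTestField_gluedField (hχ : ContDiff ℝ 1 χ) (hχ01 : ∀ x, χ x ∈ Icc 0 1)
    (hψ : IsTestField ψ) (hN : IsTestField N) (τ : E3) : IsTestField (gluedField χ ψ N τ) where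
  contDiff := by
    have hsub : ContDiff ℝ 1 fun x : E3 => x - τ := contDiff_id.sub contDiff_const
    exact ((hχ.comp hsub).smul hψ.contDiff).add
      ((contDiff_one_sub_smul hχ hN.contDiff).comp hsub)
  hasCompactSupport := hψ.hasCompactSupport.smul_left.add
    (hN.hasCompactSupport.smul_left.comp_homeomorph (Homeomorph.subRight τ))
  norm_le_one x := mem_closedBall_zero_iff.1 <|
    convex_closedBall 0 1 (mem_closedBall_zero_iff.2 (hψ.norm_le_one x))
      (mem_closedBall_zero_iff.2 (hN.norm_le_one (x - τ))) (hχ01 _).1 (sub_nonneg.2 (hχ01 _).2)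
      (add_sub_cancel _ _)

theorem divg_gluedField (hχ : ContDiff ℝ 1 χ) (hψ : ContDiff ℝ 1 ψ) (hN : ContDiff ℝ 1 N)
    (τ x : E3) :
    divg (gluedField χ ψ N τ) x =
      divg ψ x * χ (x - τ) + fderiv ℝ χ (x - τ) (ψ x) + divg ((1 - χ) • N) (x - τ) := by
  have hsub : ContDiff ℝ 1 fun x : E3 => x - τ := contDiff_id.sub contDiff_const
  have hχτ : DifferentiableAt ℝ (fun y => χ (y - τ)) x :=
    (hχ.comp hsub).differentiable one_ne_zero x
  have hψx := hψ.differentiable one_ne_zero x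
  have hNτ : DifferentiableAt ℝ (fun y => ((1 - χ) • N) (y - τ)) x :=
    ((contDiff_one_sub_smul hχ hN).comp hsub).differentiable one_ne_zero x
  rw [gluedField, divg_add (hχτ.smul hψx) hNτ, divg_comp_sub, mul_comm (divg ψ x)]
  congr 1
  rw [divg_smul hχτ hψx, fderiv_comp_sub]

theorem setIntegral_divg_one_sub_smul (hχ : ContDiff ℝ 1 χ) (hχK : tsupport χ ⊆ K)
    (hN : ContDiff ℝ 1 N) (hNc : HasCompactSupport N) :
    ∫ x in K, divg ((1 - χ) • N) x = ∫ x in K, divg N x := by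
  have hχN : ContDiff ℝ 1 (χ • N) := hχ.smul hN
  have hsplit (x : E3) : divg ((1 - χ) • N) x + divg (χ • N) x = divg N x := by
    rw [← divg_add ((contDiff_one_sub_smul hχ hN).differentiable one_ne_zero x)
      (hχN.differentiable one_ne_zero x), ← add_smul, sub_add_cancel, one_smul]
  have hzero : ∫ x in K, divg (χ • N) x = 0 := by
    rw [setIntegral_eq_integral_of_forall_compl_eq_zero fun x hx => ?_,
      integral_divg_eq_zero hχN hNc.smul_left]
    have hx' : x ∉ tsupport (χ • N) := fun h => hx (hχK (tsupport_smul_subset_left χ N h))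
    simp only [divg_eq_traceCLM, fderiv_of_notMem_tsupport ℝ hx', map_zero]
  rw [← integral_congr_ae (.of_forall hsplit), integral_add, hzero, add_zero]
  · exact (integrable_divg (contDiff_one_sub_smul hχ hN) hNc.smul_left).integrableOn
  · exact (integrable_divg hχN hNc.smul_left).integrableOn

theorem indicator_divg_gluedField (hχ : ContDiff ℝ 1 χ) (hχK : tsupport χ ⊆ K)
    (hψ : ContDiff ℝ 1 ψ) (hN : ContDiff ℝ 1 N) (τ x : E3) :
    (Ω ∩ (τ +ᵥ K)).indicator (divg (gluedField χ ψ N τ)) x =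
      Ω.indicator (divg ψ) x * χ (x - τ) + fderiv ℝ χ (x - τ) (Ω.indicator ψ x) +
        Ω.indicator 1 x * K.indicator (divg ((1 - χ) • N)) (x - τ) := by
  by_cases hxΩ : x ∈ Ω
  · by_cases hxK : x - τ ∈ K
    · simp [hxΩ, hxK, mem_vadd_set_iff_sub_mem, divg_gluedField hχ hψ hN]
    · have hx : x - τ ∉ tsupport χ := fun h => hxK (hχK h)
      simp [hxΩ, hxK, mem_vadd_set_iff_sub_mem, fderiv_of_notMem_tsupport ℝ hx,
        image_eq_zero_of_notMem_tsupport hx]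
  · simp [hxΩ]

theorem integral_setIntegral_divg_gluedField (hΩ : MeasurableSet Ω) (hΩfin : volume Ω ≠ ∞)
    (hK : MeasurableSet K) (hχ : ContDiff ℝ 1 χ) (hχc : HasCompactSupport χ)
    (hχK : tsupport χ ⊆ K) (hψ : IsTestField ψ) (hN : IsTestField N) :
    ∫ τ, ∫ x in Ω ∩ (τ +ᵥ K), divg (gluedField χ ψ N τ) x =
      (∫ x in Ω, divg ψ x) * (∫ x, χ x) + vol Ω * ∫ x in K, divg N x := by
  have hχi : Integrable χ := hχ.continuous.integrable_of_hasCompactSupport hχc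
  have hdχ : Integrable (fderiv ℝ χ) :=
    (hχ.continuous_fderiv one_ne_zero).integrable_of_hasCompactSupport (hχc.fderiv ℝ)
  have hψi : Integrable (Ω.indicator ψ) :=
    (hψ.contDiff.continuous.integrable_of_hasCompactSupport hψ.hasCompactSupport).indicator hΩ
  have hdψ : Integrable (Ω.indicator (divg ψ)) := hψ.integrable_divg.indicator hΩ
  have hone : Integrable (Ω.indicator (1 : E3 → ℝ)) :=
    (integrable_indicator_iff hΩ).2 (integrableOn_const hΩfin)
  have hdN : Integrable (K.indicator (divg ((1 - χ) • N))) :=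
    (integrable_divg (contDiff_one_sub_smul hχ hN.contDiff)
      hN.hasCompactSupport.smul_left).indicator hK
  let M := ContinuousLinearMap.mul ℝ ℝ
  let A := ContinuousLinearMap.apply ℝ ℝ (E := E3)
  have hexpand : ∀ᵐ τ, ∫ x in Ω ∩ (τ +ᵥ K), divg (gluedField χ ψ N τ) x =
      (∫ x, M (Ω.indicator (divg ψ) x) (χ (x - τ))) +
        (∫ x, A (Ω.indicator ψ x) (fderiv ℝ χ (x - τ))) +
        ∫ x, M (Ω.indicator 1 x) (K.indicator (divg ((1 - χ) • N)) (x - τ)) := by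
    filter_upwards [ae_integrable_correlation M hdψ hχi, ae_integrable_correlation A hψi hdχ,
      ae_integrable_correlation M hone hdN] with τ h₁ h₂ h₃
    rw [← integral_add h₁ h₂, ← integral_add (h₁.fun_add h₂) h₃,
      ← integral_indicator (hΩ.inter (hK.const_vadd τ))]
    exact integral_congr_ae (.of_forall
      (indicator_divg_gluedField hχ hχK hψ.contDiff hN.contDiff τ))
  rw [integral_congr_ae hexpand, integral_add, integral_add, integral_correlation M hdψ hχi,
    integral_correlation A hψi hdχ, integral_correlation M hone hdN,
    integral_fderiv_eq_zero hχ hχc, integral_indicator hΩ, integral_indicator_one hΩ,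
    integral_indicator hK,
    setIntegral_divg_one_sub_smul hχ hχK hN.contDiff hN.hasCompactSupport, map_zero, add_zero]
  · rfl
  exacts [integrable_correlation M hdψ hχi, integrable_correlation A hψi hdχ,
    (integrable_correlation M hdψ hχi).add (integrable_correlation A hψi hdχ),
    integrable_correlation M hone hdN]

theorem exists_isTestField_setIntegral_divg_eq_max (hψ : IsTestField ψ) (Ω : Set E3) :
    ∃ φ, IsTestField φ ∧ ∫ x in Ω, divg φ x = max (∫ x in Ω, divg ψ x) 0 := by
  rcases le_total (∫ x in Ω, divg ψ x) 0 with h | h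
  · exact ⟨0, isTestField_zero, by simp [divg_zero, h]⟩
  · exact ⟨ψ, hψ, (max_eq_left h).symm⟩

theorem ofReal_setIntegral_divg_mul_add_le (hΩ : MeasurableSet Ω) (hΩfin : volume Ω ≠ ∞)
    (hK : IsOpen K) {C : Set E3} (hC : IsCompact C) (hCK : C ⊆ K) (hψ : IsTestField ψ)
    (hN : IsTestField N) :
    ENNReal.ofReal (∫ x in Ω, divg ψ x) * volume C +
        volume Ω * ENNReal.ofReal (∫ x in K, divg N x) ≤ ∫⁻ τ : E3, ePer (Ω ∩ (τ +ᵥ K)) := by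
  obtain ⟨χ, hχ, hχc, hχK, hχ01, hχC⟩ := exists_contDiff_cutoff hC hK hCK
  obtain ⟨ψ', hψ', hψval⟩ := exists_isTestField_setIntegral_divg_eq_max hψ Ω
  obtain ⟨N', hN', hNval⟩ := exists_isTestField_setIntegral_divg_eq_max hN K
  have hχi : Integrable χ := hχ.continuous.integrable_of_hasCompactSupport hχc
  have hχ0 : 0 ≤ χ := fun x => (hχ01 x).1
  have hvol : 0 ≤ vol Ω := ENNReal.toReal_nonneg
  calc _ ≤ ENNReal.ofReal (max (∫ x in Ω, divg ψ x) 0) * ENNReal.ofReal (∫ x, χ x) +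
        ENNReal.ofReal (vol Ω) * ENNReal.ofReal (max (∫ x in K, divg N x) 0) := by
        rw [vol, ENNReal.ofReal_toReal hΩfin]
        gcongr
        exacts [le_max_left _ _, measure_le_ofReal_integral hC.measurableSet hχi hχ0 hχC,
          le_max_left _ _]
    _ = ENNReal.ofReal (∫ τ, ∫ x in Ω ∩ (τ +ᵥ K), divg (gluedField χ ψ' N' τ) x) := by
        rw [integral_setIntegral_divg_gluedField hΩ hΩfin hK.measurableSet hχ hχc hχK hψ' hN',
          hψval, hNval, ← ENNReal.ofReal_mul (le_max_right _ _),
          ← ENNReal.ofReal_mul hvol, ENNReal.ofReal_add]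
        · exact mul_nonneg (le_max_right _ _) (integral_nonneg hχ0)
        · exact mul_nonneg hvol (le_max_right _ _)
    _ ≤ ∫⁻ τ, ENNReal.ofReal (∫ x in Ω ∩ (τ +ᵥ K), divg (gluedField χ ψ' N' τ) x) :=
        ofReal_integral_le_lintegral_ofReal _
    _ ≤ ∫⁻ τ, ePer (Ω ∩ (τ +ᵥ K)) := lintegral_mono fun τ =>
        (isTestField_gluedField hχ hχ01 hψ' hN' τ).ofReal_setIntegral_divg_le_ePer _

theorem ePer_mul_add_le_lintegral_ePer_inter_vadd (hΩ : MeasurableSet Ω)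
    (hΩfin : volume Ω ≠ ∞) (hK : IsOpen K) :
    ePer Ω * volume K + volume Ω * ePer K ≤ ∫⁻ τ : E3, ePer (Ω ∩ (τ +ᵥ K)) := by
  have hne : ∃ ψ, IsTestField ψ := ⟨0, isTestField_zero⟩
  simp only [ePer.eq_1 Ω, ePer.eq_1 K, ENNReal.mul_iSup, ENNReal.iSup_mul]
  refine ENNReal.biSup_add_biSup_le' hne hne fun ψ hψ N hN => ?_
  rw [hK.measure_eq_iSup_isCompact]
  simp only [iSup_and', ENNReal.mul_iSup]
  rw [ENNReal.biSup_add' ⟨∅, empty_subset _, isCompact_empty⟩]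
  exact iSup₂_le fun C hC =>
    ofReal_setIntegral_divg_mul_add_le hΩ hΩfin hK hC.2 hC.1 hψ hN

end GluedField

section Kinematic

variable {Ω K : Set E3}

theorem indicator_inter_vadd (Ω K : Set E3) (τ x : E3) :
    (Ω ∩ (τ +ᵥ K)).indicator (1 : E3 → ℝ) x = Ω.indicator 1 x * K.indicator 1 (x - τ) := by
  by_cases hxΩ : x ∈ Ω <;> by_cases hxK : x - τ ∈ K <;> simp [hxΩ, hxK, mem_vadd_set_iff_sub_mem]

theorem measurable_ePer_inter_vadd (hΩ : MeasurableSet Ω) (K : Set E3) :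
    Measurable fun τ : E3 => ePer (Ω ∩ (τ +ᵥ K)) := by
  refine LowerSemicontinuous.measurable (lowerSemicontinuous_iSup fun φ =>
    lowerSemicontinuous_iSup fun hφ => Continuous.lowerSemicontinuous ?_)
  refine ENNReal.continuous_ofReal.comp
    ((continuous_setIntegral_vadd (hφ.integrable_divg.indicator hΩ) K).congr fun τ => ?_)
  rw [setIntegral_indicator hΩ, inter_comm]

theorem lintegral_ePer_inter_vadd (hΩ : MeasurableSet Ω) (hΩfin : volume Ω ≠ ∞)
    (hK : IsOpen K) (hKfin : volume K ≠ ∞) :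
    ∫⁻ τ : E3, ePer (Ω ∩ (τ +ᵥ K)) = ePer Ω * volume K + volume Ω * ePer K := by
  have hint {S : Set E3} (hS : MeasurableSet S) (hSfin : volume S ≠ ∞) :
      Integrable (S.indicator (1 : E3 → ℝ)) :=
    (integrable_indicator_iff hS).2 (integrableOn_const hSfin)
  have hbound (S : Set E3) (x : E3) : |S.indicator (1 : E3 → ℝ) x| ≤ 1 := by
    by_cases hx : x ∈ S <;> simp [hx]
  have hnorm {S : Set E3} (hS : MeasurableSet S) :
      ∫⁻ x, ‖S.indicator (1 : E3 → ℝ) x‖ₑ = volume S := by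
    simp [enorm_indicator_eq_indicator_enorm, hS]
  refine le_antisymm ?_ (ePer_mul_add_le_lintegral_ePer_inter_vadd hΩ hΩfin hK)
  have hKm := hK.measurableSet
  have hprod (τ : E3) : ePer (Ω ∩ (τ +ᵥ K)) =
      eVariation fun x => Ω.indicator 1 x * K.indicator 1 (x - τ) := by
    rw [ePer_eq_eVariation_indicator (hΩ.inter (hKm.const_vadd τ))]
    exact congrArg eVariation (funext (indicator_inter_vadd Ω K τ))
  simp only [hprod]
  rw [ePer_eq_eVariation_indicator hΩ, ePer_eq_eVariation_indicator hKm, ← hnorm hΩ, ← hnorm hKm]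
  exact lintegral_eVariation_mul_comp_sub_le (hint hΩ hΩfin) (hint hKm hKfin) (hbound Ω) (hbound K)

theorem integral_per_inter_vadd (hΩ : MeasurableSet Ω) (hΩfin : volume Ω ≠ ∞)
    (hΩper : HasFinPer Ω) (hK : IsOpen K) (hKfin : volume K ≠ ∞) (hKper : HasFinPer K) :
    ∫ τ : E3, per (Ω ∩ (τ +ᵥ K)) = per Ω * vol K + vol Ω * per K := by
  have hm := measurable_ePer_inter_vadd hΩ K
  have hval := lintegral_ePer_inter_vadd hΩ hΩfin hK hKfin
  rw [hasFinPer_iff_ePer_ne_top] at hΩper hKper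
  have hfin : ∫⁻ τ : E3, ePer (Ω ∩ (τ +ᵥ K)) ≠ ∞ := by
    rw [hval]
    finiteness
  simp only [per_eq_toReal_ePer]
  rw [integral_toReal hm.aemeasurable (ae_lt_top hm hfin), hval, ENNReal.toReal_add,
    ENNReal.toReal_mul, ENNReal.toReal_mul, vol, vol] <;> finiteness

end Kinematic

section Invariance

variable {φ : E3 → E3} {S : Set E3}

theorem divg_conj (hφ : ContDiff ℝ 1 φ) (U : E3 ≃ₗᵢ[ℝ] E3) (x : E3) :
    divg (U.symm ∘ φ ∘ U) x = divg φ (U x) := by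
  have hφU := ((hφ.differentiable one_ne_zero (U x)).hasFDerivAt.comp x
    U.toContinuousLinearEquiv.hasFDerivAt)
  have hconj := (U.symm.toContinuousLinearEquiv.hasFDerivAt.comp x hφU).fderiv
  rw [divg, divg, ← LinearMap.trace_conj' (fderiv ℝ φ (U x) : E3 →ₗ[ℝ] E3) U.symm.toLinearEquiv]
  exact congrArg (fun A : E3 →L[ℝ] E3 => LinearMap.trace ℝ E3 A) hconj

theorem IsTestField.conj (hφ : IsTestField φ) (U : E3 ≃ₗᵢ[ℝ] E3) :
    IsTestField (U.symm ∘ φ ∘ U) where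
  contDiff := U.symm.contDiff.comp (hφ.contDiff.comp U.contDiff)
  hasCompactSupport :=
    (hφ.hasCompactSupport.comp_homeomorph U.toHomeomorph).comp_left (map_zero U.symm)
  norm_le_one x := (U.symm.norm_map _).trans_le (hφ.norm_le_one (U x))

theorem ePer_image_linearIsometryEquiv_le (U : E3 ≃ₗᵢ[ℝ] E3) (S : Set E3) :
    ePer (U '' S) ≤ ePer S := by
  refine iSup₂_le fun φ hφ => ?_
  rw [U.measurePreserving.setIntegral_image_emb U.toHomeomorph.measurableEmbedding]
  simp only [← divg_conj hφ.contDiff U]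
  exact (hφ.conj U).ofReal_setIntegral_divg_le_ePer S

theorem ePer_image_linearIsometryEquiv (U : E3 ≃ₗᵢ[ℝ] E3) (S : Set E3) :
    ePer (U '' S) = ePer S := by
  refine (ePer_image_linearIsometryEquiv_le U S).antisymm ?_
  simpa [image_image] using ePer_image_linearIsometryEquiv_le U.symm (U '' S)

theorem divg_comp_const_smul (φ : E3 → E3) (c : ℝ) (x : E3) :
    divg (fun y => φ (c • y)) x = c * divg φ (c • x) := by
  simp only [divg_eq_traceCLM, fderiv_comp_smul, map_smul, smul_eq_mul]

theorem IsTestField.comp_const_smul (hφ : IsTestField φ) {c : ℝ} (hc : c ≠ 0) :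
    IsTestField fun x => φ (c • x) :=
  ⟨hφ.contDiff.comp (contDiff_const_smul c),
    hφ.hasCompactSupport.comp_homeomorph (Homeomorph.smulOfNeZero c hc),
    fun _ => hφ.norm_le_one _⟩

theorem ePer_smul_le {c : ℝ} (hc : 0 < c) (S : Set E3) :
    ePer (c • S) ≤ ENNReal.ofReal (c ^ 2) * ePer S := by
  refine iSup₂_le fun φ hφ => ?_
  have hval : ∫ x in c • S, divg φ x = c ^ 2 * ∫ x in S, divg (fun y => φ (c • y)) x := by
    simp only [divg_comp_const_smul]
    rw [integral_const_mul, Measure.setIntegral_comp_smul_of_pos _ _ _ hc, finrank_euclideanSpace,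
      Fintype.card_fin, smul_eq_mul]
    field_simp
  rw [hval, ENNReal.ofReal_mul (by positivity)]
  gcongr
  exact (hφ.comp_const_smul hc.ne').ofReal_setIntegral_divg_le_ePer S

theorem ePer_smul {c : ℝ} (hc : 0 < c) (S : Set E3) :
    ePer (c • S) = ENNReal.ofReal (c ^ 2) * ePer S := by
  refine (ePer_smul_le hc S).antisymm ?_
  have hc' := ePer_smul_le (inv_pos.2 hc) (c • S)
  rw [inv_smul_smul₀ hc.ne'] at hc'
  calc ENNReal.ofReal (c ^ 2) * ePer S
      ≤ ENNReal.ofReal (c ^ 2) * (ENNReal.ofReal (c⁻¹ ^ 2) * ePer (c • S)) := by gcongr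
    _ = ePer (c • S) := by
      rw [← mul_assoc, ← ENNReal.ofReal_mul (by positivity), ← mul_pow, mul_inv_cancel₀ hc.ne',
        one_pow, ENNReal.ofReal_one, one_mul]

theorem exists_linearIsometryEquiv_coe_eq_rot {R : Matrix (Fin 3) (Fin 3) ℝ}
    (hR : R ∈ Matrix.orthogonalGroup (Fin 3) ℝ) : ∃ U : E3 ≃ₗᵢ[ℝ] E3, ⇑U = rot R := by
  have hadj : Matrix.toEuclideanCLM (𝕜 := ℝ) R ∈ unitary (E3 →L[ℝ] E3) :=
    Unitary.map_mem Matrix.toEuclideanCLM hR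
  exact ⟨Unitary.linearIsometryEquiv ⟨_, hadj⟩, rfl⟩

theorem rigidImage_eq_vadd_image_rot (R : Matrix (Fin 3) (Fin 3) ℝ) (τ : E3) (S : Set E3) :
    rigidImage R τ S = τ +ᵥ rot R '' S := by
  rw [rigidImage, ← image_vadd, image_image]
  simp only [vadd_eq_add, add_comm τ]

end Invariance

section Convex

theorem abs_setIntegral_sub_setIntegral_le {X : Type*} [MeasurableSpace X] {μ : Measure X}
    {f : X → ℝ} {S H : Set X} (hf : Integrable f μ) (hf1 : ∀ x, |f x| ≤ 1)
    (hS : MeasurableSet S) (hSH : S ⊆ H) (hH : μ H ≠ ∞) :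
    |∫ x in H, f x ∂μ - ∫ x in S, f x ∂μ| ≤ μ.real H - μ.real S := by
  have hdiff : μ (H \ S) < ∞ := (measure_mono sdiff_subset).trans_lt hH.lt_top
  rw [← setIntegral_sdiff hS hf.integrableOn hSH, ← measureReal_sdiff hSH hS hH]
  simpa using norm_setIntegral_le_of_norm_le_const (f := f) (C := 1) hdiff fun x _ => hf1 x

variable {E : Type*} [NormedAddCommGroup E] [NormedSpace ℝ E]

theorem vadd_subset_homothety_image_of_convex {K : Set E} (hK : Convex ℝ K) {c p : E} (hp : p ∈ K)
    {s : ℝ} (hs : 0 ≤ s) : (s • (p - c)) +ᵥ K ⊆ AffineMap.homothety c (1 + s) '' K := by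
  rintro _ ⟨x, hx, rfl⟩
  refine ⟨(1 / (1 + s)) • x + (s / (1 + s)) • p,
    hK hx hp (by positivity) (by positivity) (by field_simp), ?_⟩
  simp only [AffineMap.homothety_apply, vsub_eq_sub, vadd_eq_add, smul_sub, smul_add, smul_smul]
  rw [mul_div_cancel₀ _ (by positivity), mul_div_cancel₀ _ (by positivity)]
  module

variable [FiniteDimensional ℝ E] [MeasurableSpace E] [BorelSpace E]
  {μ : Measure E} [μ.IsAddHaarMeasure] {f : E → ℝ} {K : Set E}

theorem hasDerivAt_setIntegral_vadd (hf : ContDiff ℝ 1 f) (hfc : HasCompactSupport f)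
    (hK : μ K ≠ ∞) (e : E) :
    HasDerivAt (fun t : ℝ => ∫ x in (t • e) +ᵥ K, f x ∂μ) (∫ x in K, fderiv ℝ f x e ∂μ) 0 := by
  have hcont : Continuous fun x => fderiv ℝ f x e :=
    (hf.continuous_fderiv one_ne_zero).clm_apply continuous_const
  obtain ⟨C, hC⟩ := (hfc.fderiv_apply (𝕜 := ℝ) e).exists_bound_of_continuous hcont
  have hshift (t : ℝ) : Integrable (fun x => f (t • e + x)) μ :=
    (hf.continuous.integrable_of_hasCompactSupport hfc).comp_add_left _
  simp only [setIntegral_vadd]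
  have hderiv (x : E) (t : ℝ) :
      HasDerivAt (fun t : ℝ => f (t • e + x)) (fderiv ℝ f (t • e + x) e) t := by
    have hline : HasDerivAt (fun t : ℝ => t • e + x) e t := by
      simpa using ((hasDerivAt_id t).smul_const e).add_const x
    exact (hf.differentiable one_ne_zero _).hasFDerivAt.comp_hasDerivAt t hline
  simpa using (hasDerivAt_integral_of_dominated_loc_of_deriv_le (bound := fun _ => C) univ_mem
    (.of_forall fun t => (hshift t).integrableOn.aestronglyMeasurable) (hshift 0).integrableOn
    (by fun_prop) (.of_forall fun x t _ => hC _) (integrableOn_const hK)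
    (.of_forall fun x t _ => hderiv x t)).2

theorem setIntegral_vadd_sub_le (hK : Convex ℝ K) (hKo : IsOpen K) (hKfin : μ K ≠ ∞)
    (hf : Integrable f μ) (hf1 : ∀ x, |f x| ≤ 1) {c p : E} (hc : c ∈ K) (hp : p ∈ K)
    {s : ℝ} (hs : 0 ≤ s) :
    ∫ x in (s • (p - c)) +ᵥ K, f x ∂μ - ∫ x in K, f x ∂μ ≤
      2 * (((1 + s) ^ Module.finrank ℝ E - 1) * μ.real K) := by
  obtain ⟨H, hH⟩ : ∃ H, H = AffineMap.homothety c (1 + s) '' K := ⟨_, rfl⟩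
  have hHmeas : μ H = ENNReal.ofReal ((1 + s) ^ Module.finrank ℝ E) * μ K := by
    rw [hH, Measure.addHaar_image_homothety, abs_of_nonneg (by positivity)]
  have hHfin : μ H ≠ ∞ := by
    rw [hHmeas]
    finiteness
  have hHreal : μ.real H = (1 + s) ^ Module.finrank ℝ E * μ.real K := by
    rw [Measure.real, hHmeas, ENNReal.toReal_mul, ENNReal.toReal_ofReal (by positivity),
      Measure.real]
  have hKH : K ⊆ H := by simpa only [sub_self, smul_zero, zero_vadd, ← hH] using
    vadd_subset_homothety_image_of_convex (c := c) hK hc hs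
  have hKm := hKo.measurableSet
  have htrans := abs_setIntegral_sub_setIntegral_le hf hf1 (hKm.const_vadd (s • (p - c)))
    ((vadd_subset_homothety_image_of_convex hK hp hs).trans_eq hH.symm) hHfin
  have hself := abs_setIntegral_sub_setIntegral_le hf hf1 hKm hKH hHfin
  rw [hHreal, measureReal_def μ (_ +ᵥ K), measure_vadd, ← measureReal_def] at htrans
  rw [hHreal] at hself
  linarith [(abs_le.1 htrans).1, (abs_le.1 hself).2]

theorem setIntegral_fderiv_apply_le (hK : Convex ℝ K) (hKo : IsOpen K) (hKfin : μ K ≠ ∞)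
    (hf : ContDiff ℝ 1 f) (hfc : HasCompactSupport f) (hf1 : ∀ x, |f x| ≤ 1)
    {c e : E} {r : ℝ} (hr : 0 < r) (hc : c ∈ K) (hp : c + r • e ∈ K) :
    ∫ x in K, fderiv ℝ f x e ∂μ ≤ 2 * (Module.finrank ℝ E / r * μ.real K) := by
  set n := Module.finrank ℝ E
  have hvol : HasDerivAt (fun t : ℝ => 2 * (((1 + t / r) ^ n - 1) * μ.real K))
      (2 * (n / r * μ.real K)) 0 := by
    have hpow := (((hasDerivAt_id (0 : ℝ)).div_const r).const_add 1).pow n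
    simpa [div_eq_mul_inv] using ((hpow.sub_const 1).mul_const (μ.real K)).const_mul 2
  refine le_of_tendsto_of_tendsto (hasDerivAt_setIntegral_vadd hf hfc hKfin e
    ).tendsto_slope_zero_right hvol.tendsto_slope_zero_right ?_
  filter_upwards [self_mem_nhdsWithin] with t (ht : 0 < t)
  have hle := setIntegral_vadd_sub_le hK hKo hKfin
    (hf.continuous.integrable_of_hasCompactSupport hfc) hf1 hc hp (div_pos ht hr).le
  rw [add_sub_cancel_left, smul_smul, div_mul_cancel₀ _ hr.ne'] at hle
  simpa using mul_le_mul_of_nonneg_left hle (inv_pos.2 ht).le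

theorem hasFinPer_of_convex {K : Set E3} (hK : Convex ℝ K) (hKo : IsOpen K)
    (hKfin : volume K ≠ ∞) : HasFinPer K := by
  obtain rfl | ⟨c, hc⟩ := K.eq_empty_or_nonempty
  · exact ⟨0, by rintro _ ⟨φ, -, -, -, rfl⟩; simp⟩
  obtain ⟨r, hr, hball⟩ := nhds_basis_closedBall.mem_iff.1 (hKo.mem_nhds hc)
  refine ⟨∑ _i : Fin 3, 2 * (Module.finrank ℝ E3 / r * volume.real K), ?_⟩
  rintro _ ⟨φ, hφ, hφc, hφ1, rfl⟩
  have hcoord (i : Fin 3) : ContDiff ℝ 1 fun x => φ x i := by fun_prop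
  have hcoordc (i : Fin 3) : HasCompactSupport fun x => φ x i :=
    hφc.comp_left (g := fun y : E3 => y i) rfl
  have hdiv (x : E3) : divg φ x =
      ∑ i, fderiv ℝ (fun y => φ y i) x (EuclideanSpace.basisFun (Fin 3) ℝ i) := by
    rw [divg_eq_sum]
    refine Finset.sum_congr rfl fun i _ => ?_
    have hcomp : HasFDerivAt (fun y => φ y i) _ x :=
      (EuclideanSpace.proj i : E3 →L[ℝ] ℝ).hasFDerivAt.comp x
        (hφ.differentiable one_ne_zero x).hasFDerivAt
    rw [hcomp.fderiv]
    rfl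
  have hint (i : Fin 3) (e : E3) : Integrable fun x => fderiv ℝ (fun y => φ y i) x e :=
    (((hcoord i).continuous_fderiv one_ne_zero).clm_apply
      continuous_const).integrable_of_hasCompactSupport ((hcoordc i).fderiv_apply (𝕜 := ℝ) e)
  simp only [hdiv]
  rw [integral_finsetSum _ fun i _ => (hint i _).integrableOn]
  gcongr with i
  refine setIntegral_fderiv_apply_le hK hKo hKfin (hcoord i) (hcoordc i)
    (fun x => (PiLp.norm_apply_le (φ x) i).trans (hφ1 x)) hr hc (hball ?_)
  simp [norm_smul, abs_of_pos hr]

end Convex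

theorem volume_image_linearIsometryEquiv {E F : Type*} [NormedAddCommGroup E]
    [InnerProductSpace ℝ E] [FiniteDimensional ℝ E] [MeasurableSpace E] [BorelSpace E]
    [NormedAddCommGroup F] [InnerProductSpace ℝ F] [FiniteDimensional ℝ F] [MeasurableSpace F]
    [BorelSpace F] (U : E ≃ₗᵢ[ℝ] F) (S : Set E) :
    volume (U '' S) = volume S := by
  rw [← U.measurePreserving.measure_preimage_emb U.toHomeomorph.measurableEmbedding,
    U.injective.preimage_image]

section Rigid

variable {Ω Δ : Set E3} {ℓ : ℝ}

theorem integral_per_inter_rigidImage (hΔ : IsOpen Δ) (hΔfin : volume Δ ≠ ∞)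
    (hΔper : HasFinPer Δ) (hℓ : 0 < ℓ) (hΩ : MeasurableSet Ω) (hΩfin : volume Ω ≠ ∞)
    (hΩper : HasFinPer Ω) {R : Matrix (Fin 3) (Fin 3) ℝ}
    (hR : R ∈ Matrix.orthogonalGroup (Fin 3) ℝ) :
    ∫ τ : E3, per (Ω ∩ rigidImage R τ (ℓ • Δ)) =
      per Ω * (ℓ ^ 3 * vol Δ) + vol Ω * (ℓ ^ 2 * per Δ) := by
  obtain ⟨U, hU⟩ := exists_linearIsometryEquiv_coe_eq_rot hR
  simp only [rigidImage_eq_vadd_image_rot, ← hU]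
  have hvol : volume (U '' (ℓ • Δ)) = ENNReal.ofReal (ℓ ^ 3) * volume Δ := by
    rw [volume_image_linearIsometryEquiv, Measure.addHaar_smul, finrank_euclideanSpace,
      Fintype.card_fin, abs_of_pos (by positivity)]
  have hper := (ePer_image_linearIsometryEquiv U (ℓ • Δ)).trans (ePer_smul hℓ Δ)
  have hKper : HasFinPer (U '' (ℓ • Δ)) := by
    rw [hasFinPer_iff_ePer_ne_top] at hΔper ⊢
    rw [hper]
    finiteness
  have hKo : IsOpen (U '' (ℓ • Δ)) := U.toHomeomorph.isOpenMap _ (hΔ.smul₀ hℓ.ne')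
  rw [integral_per_inter_vadd hΩ hΩfin hΩper hKo (by rw [hvol]; finiteness) hKper]
  simp only [vol, per_eq_toReal_ePer, hvol, hper, ENNReal.toReal_mul,
    ENNReal.toReal_ofReal (pow_nonneg hℓ.le _)]

theorem perimeter_localization_general (μ : Measure (Matrix (Fin 3) (Fin 3) ℝ))
    [IsProbabilityMeasure μ] (hμ : ∀ᵐ R ∂μ, R ∈ Matrix.orthogonalGroup (Fin 3) ℝ)
    (hΔ : IsOpen Δ) (hΔfin : volume Δ ≠ ∞) (hΔper : HasFinPer Δ) (hℓ : 0 < ℓ)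
    (hΩ : MeasurableSet Ω) (hΩfin : volume Ω ≠ ∞) (hΩper : HasFinPer Ω) :
    vol Δ * per Ω = (∫ R, (∫ τ : E3, per (Ω ∩ rigidImage R τ (ℓ • Δ))) ∂μ) / ℓ ^ 3
      - per Δ * vol Ω / ℓ := by
  have hrot : ∀ᵐ R ∂μ, ∫ τ : E3, per (Ω ∩ rigidImage R τ (ℓ • Δ)) =
      per Ω * (ℓ ^ 3 * vol Δ) + vol Ω * (ℓ ^ 2 * per Δ) :=
    hμ.mono fun R hR => integral_per_inter_rigidImage hΔ hΔfin hΔper hℓ hΩ hΩfin hΩper hR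
  rw [integral_congr_ae hrot, integral_const, probReal_univ, one_smul]
  field_simp
  ring

theorem mem_orthogonalGroup_of_mem_SO3 {R : Matrix (Fin 3) (Fin 3) ℝ} (hR : R ∈ SO3) :
    R ∈ Matrix.orthogonalGroup (Fin 3) ℝ :=
  (Matrix.mem_orthogonalGroup_iff (Fin 3) ℝ).2 hR.1

theorem IsTetra.isOpen (hΔ : IsTetra Δ) : IsOpen Δ := by
  obtain ⟨v, -, rfl⟩ := hΔ
  exact isOpen_interior

theorem IsTetra.convex (hΔ : IsTetra Δ) : Convex ℝ Δ := by
  obtain ⟨v, -, rfl⟩ := hΔ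
  exact (convex_convexHull ℝ _).interior

end Rigid

/-- **Localization of the perimeter**: for a tetrahedron `Δ` of unit volume, every `ℓ > 0` and
every finite-measure finite-perimeter set `Ω`,
`Per(Ω) = ∫_G Per(Ω ∩ gℓΔ) dg/ℓ³ − Per(Δ)|Ω|/ℓ`, where the integral over the group
`G = ℝ³ ⋊ SO(3)` is the Haar probability measure of SO(3) times the Lebesgue measure on
translations (so that `ℓ⁻³ ∫_G 1_{gℓΔ}(x) dg = 1`). -/
theorem perimeter_localization (μ : Measure (Matrix (Fin 3) (Fin 3) ℝ)) (hμ : IsHaarSO3 μ)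
    (Δ : Set E3) (hΔ : IsTetra Δ) (hΔvol : volume Δ = 1)
    (ℓ : ℝ) (hℓ : 0 < ℓ) (Ω : Set E3) (hΩm : MeasurableSet Ω) (hΩfin : volume Ω < ⊤)
    (hΩper : HasFinPer Ω) :
    per Ω = (∫ R, (∫ τ : E3, per (Ω ∩ rigidImage R τ (ℓ • Δ))) ∂μ) / ℓ^3
      - per Δ * vol Ω / ℓ := by
  obtain ⟨hprob, hSO3, -⟩ := hμ
  have hΔfin : volume Δ ≠ ∞ := by simp [hΔvol]
  have horth : ∀ᵐ R ∂μ, R ∈ Matrix.orthogonalGroup (Fin 3) ℝ :=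
    (show ∀ᵐ R ∂μ, R ∈ SO3 from hSO3).mono fun _ => mem_orthogonalGroup_of_mem_SO3
  simpa [vol, hΔvol] using perimeter_localization_general μ horth hΔ.isOpen hΔfin
    (hasFinPer_of_convex hΔ.convex hΔ.isOpen hΔfin) hℓ hΩm hΩfin.ne hΩper

end
end

section
/- Let Ω ⊂ B(0,r) and Ω' ⊂ B(0,r') be bounded measurable subsets of ℝ³ and let z, z' ∈ ℝ³ with |z − z'| ≥ r + r'. Then the rotation-averaged Coulomb interaction satisfies ⨍_{SO(3)} ⨍_{SO(3)} ∬_{(z+RΩ)×(z'+R'Ω')} |x − y|⁻¹ dx dy dR dR' = |Ω| |Ω'| / |z − z'|, where ⨍ denotes the average with respect to the Haar probability measure on SO(3). -/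
open MeasureTheory Metric Set Filter Bornology
open scoped Topology ENNReal NNReal Pointwise

noncomputable section

/-!
For a Haar-distributed rotation `R` the point `R y` is uniform on the sphere of radius `‖y‖`, so by
Archimedes' hat-box theorem `⟪w, R y⟫` is uniform on `[-‖w‖ ‖y‖, ‖w‖ ‖y‖]`. Since
`‖w - R y‖² = ‖w‖² + ‖y‖² - 2 ⟪w, R y⟫`, Newton's shell theorem
`∫ 1 / ‖w - R y‖ dR = 1 / max ‖w‖ ‖y‖` becomes an elementary integral over `[-1, 1]`. Applying it to
`R'` and then to `R` shows that any two points of the bodies interact on average as if both sat at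
the centres, and Fubini's theorem concludes.

The hat-box theorem itself follows from left invariance alone: differentiating along the
one-parameter groups `exp (t A)` with `A` skew gives `(n + 3) E uⁿ⁺² = (n + 1) ‖w‖² ‖y‖² E uⁿ` for
`u = ⟪w, R y⟫`, and a compactly supported law is determined by its moments.
-/

lemma integrable_comp_of_ae_mem_isCompact {α E F : Type*} [MeasurableSpace α] {m : Measure α}
    [IsFiniteMeasure m] [TopologicalSpace E] [MeasurableSpace E] [OpensMeasurableSpace E]
    [TopologicalSpace.PseudoMetrizableSpace E]
    [NormedAddCommGroup F] [SecondCountableTopology F] {X : α → E} {f : E → F} {K : Set E}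
    (hX : Measurable X) (hf : Continuous f) (hK : IsCompact K) (hXK : ∀ᵐ a ∂m, X a ∈ K) :
    Integrable (fun a => f (X a)) m := by
  borelize F
  obtain ⟨C, hC⟩ := hK.exists_bound_of_continuousOn hf.continuousOn
  exact .of_bound (hf.measurable.comp hX).aestronglyMeasurable C (hXK.mono fun a => hC (X a))

lemma abs_integral_sub_le_of_ae_mem {α : Type*} [MeasurableSpace α] {m : Measure α}
    [IsFiniteMeasure m] {s : Set α} {f g : α → ℝ} {ε : ℝ} (hs : ∀ᵐ x ∂m, x ∈ s)
    (hf : Integrable f m) (hg : Integrable g m) (h : ∀ x ∈ s, |f x - g x| ≤ ε) :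
    |∫ x, f x ∂m - ∫ x, g x ∂m| ≤ ε * m.real univ := by
  rw [← integral_sub hf hg]
  simpa only [Real.norm_eq_abs] using norm_integral_le_of_norm_le_const
    (hs.mono fun x hx => (Real.norm_eq_abs (f x - g x)).trans_le (h x hx))

theorem measure_eq_of_integral_pow_eq {m₁ m₂ : Measure ℝ} [IsFiniteMeasure m₁] [IsFiniteMeasure m₂]
    {a b : ℝ} (h₁ : ∀ᵐ x ∂m₁, x ∈ Icc a b) (h₂ : ∀ᵐ x ∂m₂, x ∈ Icc a b)
    (hpow : ∀ n : ℕ, ∫ x, x ^ n ∂m₁ = ∫ x, x ^ n ∂m₂) : m₁ = m₂ := by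
  have hint₁ {f : ℝ → ℝ} (hf : Continuous f) : Integrable f m₁ :=
    integrable_comp_of_ae_mem_isCompact measurable_id hf isCompact_Icc h₁
  have hint₂ {f : ℝ → ℝ} (hf : Continuous f) : Integrable f m₂ :=
    integrable_comp_of_ae_mem_isCompact measurable_id hf isCompact_Icc h₂
  have hpoly (p : Polynomial ℝ) : ∫ x, p.eval x ∂m₁ = ∫ x, p.eval x ∂m₂ := by
    simp only [Polynomial.eval_eq_sum_range]
    rw [integral_finsetSum _ fun i _ => hint₁ (by fun_prop),
      integral_finsetSum _ fun i _ => hint₂ (by fun_prop)]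
    simp only [integral_const_mul, hpow]
  refine ext_of_forall_integral_eq_of_IsFiniteMeasure fun f => ?_
  refine eq_of_forall_dist_le fun ε hε => ?_
  set M := m₁.real univ + m₂.real univ
  have hM : 0 ≤ M := add_nonneg measureReal_nonneg measureReal_nonneg
  obtain ⟨p, hp⟩ := exists_polynomial_near_of_continuousOn a b f f.continuous.continuousOn
    (ε / (M + 1)) (div_pos hε (by linarith))
  have hp' (x : ℝ) (hx : x ∈ Icc a b) : |p.eval x - f x| ≤ ε / (M + 1) := (hp x hx).le
  calc dist (∫ x, f x ∂m₁) (∫ x, f x ∂m₂)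
      ≤ |∫ x, p.eval x ∂m₁ - ∫ x, f x ∂m₁| + |∫ x, p.eval x ∂m₂ - ∫ x, f x ∂m₂| := by
        rw [hpoly p, Real.dist_eq, add_comm]
        simpa only [sub_sub_sub_cancel_left] using
          abs_sub (∫ x, p.eval x ∂m₂ - ∫ x, f x ∂m₂) (∫ x, p.eval x ∂m₂ - ∫ x, f x ∂m₁)
    _ ≤ ε / (M + 1) * m₁.real univ + ε / (M + 1) * m₂.real univ :=
        add_le_add
          (abs_integral_sub_le_of_ae_mem h₁ (hint₁ p.continuous) (hint₁ f.continuous) hp')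
          (abs_integral_sub_le_of_ae_mem h₂ (hint₂ p.continuous) (hint₂ f.continuous) hp')
    _ = ε * (M / (M + 1)) := by ring
    _ ≤ ε := mul_le_of_le_one_right hε.le ((div_le_one₀ (by linarith)).2 (by linarith))

lemma integrable_prod_of_nonneg_of_ae_integral_eq {α β : Type*} [MeasurableSpace α]
    [MeasurableSpace β] {m : Measure α} {ρ : Measure β} [SFinite m] [IsFiniteMeasure ρ]
    {K : α × β → ℝ} {c : ℝ} (hK : AEStronglyMeasurable K (m.prod ρ)) (hK_nonneg : ∀ p, 0 ≤ K p)
    (hint : ∀ᵐ b ∂ρ, Integrable (fun a => K (a, b)) m) (hc : ∀ᵐ b ∂ρ, ∫ a, K (a, b) ∂m = c) :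
    Integrable K (m.prod ρ) := by
  refine (integrable_prod_iff' hK).2 ⟨hint, (integrable_const c).congr (hc.mono fun b hb => ?_)⟩
  simp only [Real.norm_of_nonneg (hK_nonneg _), hb]

lemma integral_integral_integral_integral_swap {α β γ δ : Type*} [MeasurableSpace α]
    [MeasurableSpace β] [MeasurableSpace γ] [MeasurableSpace δ] {m₁ : Measure α} {m₂ : Measure β}
    {ρ₁ : Measure γ} {ρ₂ : Measure δ} [SFinite m₁] [SFinite m₂] [SFinite ρ₁] [SFinite ρ₂]
    {K : α → β → γ → δ → ℝ}
    (hK : Integrable (fun p : (α × β) × γ × δ => K p.1.1 p.1.2 p.2.1 p.2.2)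
      ((m₁.prod m₂).prod (ρ₁.prod ρ₂))) :
    ∫ a, ∫ b, ∫ c, ∫ d, K a b c d ∂ρ₂ ∂ρ₁ ∂m₂ ∂m₁ =
      ∫ q, ∫ p, K p.1 p.2 q.1 q.2 ∂(m₁.prod m₂) ∂(ρ₁.prod ρ₂) := by
  have hinner : ∀ᵐ p ∂m₁.prod m₂, ∫ q, K p.1 p.2 q.1 q.2 ∂ρ₁.prod ρ₂ =
      ∫ c, ∫ d, K p.1 p.2 c d ∂ρ₂ ∂ρ₁ :=
    hK.prod_right_ae.mono fun p hp => integral_prod _ hp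
  rw [← integral_prod_symm _ hK, integral_prod _ hK, integral_congr_ae hinner,
    integral_prod _ (hK.integral_prod_left.congr hinner)]

open scoped ProbabilityTheory in
lemma integral_cond_Icc_neg_one_one (f : ℝ → ℝ) :
    ∫ t, f t ∂volume[|Icc (-1) 1] = 2⁻¹ * ∫ t in (-1)..1, f t := by
  rw [ProbabilityTheory.cond, integral_smul_measure, integral_Icc_eq_integral_Ioc,
    ← intervalIntegral.integral_of_le (by norm_num), Real.volume_Icc]
  norm_num

section IntegralOneDivSqrt

variable {a b : ℝ}

lemma hasDerivAt_neg_sqrt_div {t : ℝ} (ha : a ≠ 0) (hb : b ≠ 0)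
    (h : 0 < a ^ 2 + b ^ 2 - 2 * (a * b * t)) :
    HasDerivAt (fun s => -√(a ^ 2 + b ^ 2 - 2 * (a * b * s)) / (a * b))
      (1 / √(a ^ 2 + b ^ 2 - 2 * (a * b * t))) t := by
  have hlin : HasDerivAt (fun s => a ^ 2 + b ^ 2 - 2 * (a * b * s)) (-(2 * (a * b))) t := by
    simpa using (((hasDerivAt_id t).const_mul (a * b)).const_mul 2).const_sub (a ^ 2 + b ^ 2)
  refine ((hlin.sqrt h.ne').neg.div_const (a * b)).congr_deriv ?_
  field_simp [(Real.sqrt_pos.2 h).ne']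

lemma hasDerivAt_neg_sqrt_div_of_mem_Ioo {t : ℝ} (hab : 0 < a * b) (ht : t ∈ Ioo (-1) 1) :
    HasDerivAt (fun s => -√(a ^ 2 + b ^ 2 - 2 * (a * b * s)) / (a * b))
      (1 / √(a ^ 2 + b ^ 2 - 2 * (a * b * t))) t :=
  hasDerivAt_neg_sqrt_div (left_ne_zero_of_mul hab.ne') (right_ne_zero_of_mul hab.ne')
    (by nlinarith [sq_nonneg (a - b), mul_lt_mul_of_pos_left ht.2 hab])

lemma intervalIntegrable_one_div_sqrt (ha : 0 ≤ a) (hb : 0 ≤ b) :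
    IntervalIntegrable (fun t => 1 / √(a ^ 2 + b ^ 2 - 2 * (a * b * t))) volume (-1) 1 := by
  rcases (mul_nonneg ha hb).eq_or_lt' with hab | hab
  · simp [hab]
  · exact (intervalIntegrable_iff_integrableOn_Ioc_of_le (by norm_num)).2 <|
      intervalIntegral.integrableOn_deriv_of_nonneg (by fun_prop)
        (fun t ht => hasDerivAt_neg_sqrt_div_of_mem_Ioo hab ht) fun t _ => by positivity

lemma integral_one_div_sqrt (ha : 0 ≤ a) (hb : 0 ≤ b) :
    ∫ t in (-1)..1, 1 / √(a ^ 2 + b ^ 2 - 2 * (a * b * t)) = 2 / max a b := by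
  rcases (mul_nonneg ha hb).eq_or_lt' with hab | hab
  · have hmax : √(a ^ 2 + b ^ 2) = max a b := by
      rcases mul_eq_zero.1 hab with rfl | rfl <;> simp [ha, hb]
    simp only [hab, zero_mul, mul_zero, sub_zero, hmax, intervalIntegral.integral_const,
      smul_eq_mul]
    ring
  have ha' : a ≠ 0 := left_ne_zero_of_mul hab.ne'
  have hb' : b ≠ 0 := right_ne_zero_of_mul hab.ne'
  have hplus : a ^ 2 + b ^ 2 - 2 * (a * b * -1) = (a + b) ^ 2 := by ring
  have hminus : a ^ 2 + b ^ 2 - 2 * (a * b * 1) = (a - b) ^ 2 := by ring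
  rw [intervalIntegral.integral_eq_sub_of_hasDerivAt_of_le (by norm_num) (by fun_prop)
    (fun t ht => hasDerivAt_neg_sqrt_div_of_mem_Ioo hab ht)
    (intervalIntegrable_one_div_sqrt ha hb), hplus, hminus, Real.sqrt_sq (add_nonneg ha hb),
    Real.sqrt_sq_eq_abs]
  rcases le_total a b with h | h
  · rw [abs_of_nonpos (by linarith), max_eq_right h]
    field_simp
    ring
  · rw [abs_of_nonneg (by linarith), max_eq_left h]
    field_simp
    ring

end IntegralOneDivSqrt

section Rotations

open scoped Matrix RealInnerProductSpace ProbabilityTheory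
open NormedSpace (exp)

instance : BorelSpace (Matrix (Fin 3) (Fin 3) ℝ) :=
  inferInstanceAs (BorelSpace (Fin 3 → Fin 3 → ℝ))

instance : SecondCountableTopology (Matrix (Fin 3) (Fin 3) ℝ) :=
  inferInstanceAs (SecondCountableTopology (Fin 3 → Fin 3 → ℝ))

lemma rot_eq_toEuclideanCLM (R : Matrix (Fin 3) (Fin 3) ℝ) (x : E3) :
    rot R x = Matrix.toEuclideanCLM (𝕜 := ℝ) R x := rfl

lemma rot_mul (S R : Matrix (Fin 3) (Fin 3) ℝ) (x : E3) : rot (S * R) x = rot S (rot R x) := by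
  simp [rot_eq_toEuclideanCLM]

lemma rot_one (x : E3) : rot 1 x = x := by
  simp [rot_eq_toEuclideanCLM]

lemma inner_rot_right (R : Matrix (Fin 3) (Fin 3) ℝ) (x y : E3) :
    ⟪x, rot R y⟫ = ⟪rot Rᵀ x, y⟫ := by
  rw [rot_eq_toEuclideanCLM, rot_eq_toEuclideanCLM, ← Matrix.conjTranspose_eq_transpose_of_trivial,
    ← Matrix.star_eq_conjTranspose, map_star, ContinuousLinearMap.star_eq_adjoint,
    ContinuousLinearMap.adjoint_inner_left]

lemma norm_rot {R : Matrix (Fin 3) (Fin 3) ℝ} (hR : R ∈ SO3) (x : E3) : ‖rot R x‖ = ‖x‖ := by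
  rw [norm_eq_sqrt_real_inner, inner_rot_right, ← rot_mul, mul_eq_one_comm.mp hR.1, rot_one,
    ← norm_eq_sqrt_real_inner]

@[fun_prop]
lemma continuous_rot : Continuous fun p : Matrix (Fin 3) (Fin 3) ℝ × E3 => rot p.1 p.2 := by
  unfold rot
  fun_prop

lemma exp_mem_SO3 {A : Matrix (Fin 3) (Fin 3) ℝ} (hA : Aᵀ = -A) : exp A ∈ SO3 := by
  have horth (B : Matrix (Fin 3) (Fin 3) ℝ) (hB : Bᵀ = -B) : exp B * (exp B)ᵀ = 1 := by
    rw [← Matrix.exp_transpose, hB, Matrix.exp_neg,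
      Matrix.mul_nonsing_inv _ ((Matrix.isUnit_iff_isUnit_det _).mp (Matrix.isUnit_exp B))]
  have hdet_sq : (exp A).det * (exp A).det = 1 := by
    simpa using congrArg Matrix.det (horth A hA)
  have hdet_nonneg : 0 ≤ (exp A).det := by
    have hhalf : exp A = exp ((2 : ℝ)⁻¹ • A) * exp ((2 : ℝ)⁻¹ • A) := by
      rw [← Matrix.exp_add_of_commute _ _ (Commute.refl _), ← add_smul]
      norm_num
    rw [hhalf, Matrix.det_mul]
    exact mul_self_nonneg _
  exact ⟨horth A hA, by nlinarith⟩

lemma hasDerivAt_rot_exp_smul (A : Matrix (Fin 3) (Fin 3) ℝ) (x : E3) (t : ℝ) :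
    HasDerivAt (fun s : ℝ => rot (exp (s • A)) x) (rot A (rot (exp (t • A)) x)) t := by
  open scoped Matrix.Norms.L2Operator in
  let ev : Matrix (Fin 3) (Fin 3) ℝ →ₗ[ℝ] E3 :=
    (ContinuousLinearMap.apply ℝ E3 x).toLinearMap ∘ₗ
      (Matrix.toEuclideanCLM (n := Fin 3) (𝕜 := ℝ)).toAlgEquiv.toLinearMap
  rw [← rot_mul]
  exact ev.toContinuousLinearMap.hasFDerivAt.comp_hasDerivAt t (hasDerivAt_exp_smul_const' A t)

lemma hasDerivAt_comp_rot_exp_smul {f : E3 → ℝ} (hf : Differentiable ℝ f)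
    (A : Matrix (Fin 3) (Fin 3) ℝ) (x : E3) (t : ℝ) :
    HasDerivAt (fun s : ℝ => f (rot (exp (s • A)) x))
      (fderiv ℝ f (rot (exp (t • A)) x) (rot A (rot (exp (t • A)) x))) t :=
  (hf _).hasFDerivAt.comp_hasDerivAt t (hasDerivAt_rot_exp_smul A x t)

lemma rot_vecMulVec_sub_vecMulVec (p w x : E3) :
    rot (Matrix.vecMulVec p.ofLp w.ofLp - Matrix.vecMulVec w.ofLp p.ofLp) x =
      ⟪w, x⟫ • p - ⟪p, x⟫ • w := by
  rw [rot_eq_toEuclideanCLM, map_sub, sub_apply]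
  ext i
  simp [Matrix.vecMulVec_mulVec, EuclideanSpace.inner_eq_star_dotProduct, dotProduct_comm,
    mul_comm]

namespace IsHaarSO3

variable {μ : Measure (Matrix (Fin 3) (Fin 3) ℝ)}

lemma isProbabilityMeasure (hμ : IsHaarSO3 μ) : IsProbabilityMeasure μ := hμ.1

lemma ae_mem (hμ : IsHaarSO3 μ) : ∀ᵐ R ∂μ, R ∈ SO3 := hμ.2.1

lemma integral_comp_rot_rot (hμ : IsHaarSO3 μ) {S : Matrix (Fin 3) (Fin 3) ℝ} (hS : S ∈ SO3)
    {f : E3 → ℝ} (hf : Continuous f) (y : E3) :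
    ∫ R, f (rot S (rot R y)) ∂μ = ∫ R, f (rot R y) ∂μ := by
  simp only [← rot_mul]
  conv_rhs => rw [← hμ.2.2 S hS]
  exact (integral_map (f := fun R => f (rot R y)) (by fun_prop)
    (Continuous.aestronglyMeasurable (by fun_prop))).symm

lemma ae_rot_mem_sphere (hμ : IsHaarSO3 μ) (y : E3) : ∀ᵐ R ∂μ, rot R y ∈ sphere (0 : E3) ‖y‖ :=
  hμ.ae_mem.mono fun _ hR => mem_sphere_zero_iff_norm.2 (norm_rot hR y)

lemma integrable_comp_rot (hμ : IsHaarSO3 μ) {f : E3 → ℝ} (hf : Continuous f) (y : E3) :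
    Integrable (fun R => f (rot R y)) μ :=
  have := hμ.isProbabilityMeasure
  integrable_comp_of_ae_mem_isCompact (by fun_prop) hf (isCompact_sphere 0 ‖y‖)
    (hμ.ae_rot_mem_sphere y)

lemma integral_fderiv_rot_of_transpose_eq_neg (hμ : IsHaarSO3 μ) {A : Matrix (Fin 3) (Fin 3) ℝ}
    (hA : Aᵀ = -A) {f : E3 → ℝ} (hf : ContDiff ℝ 1 f) (y : E3) :
    ∫ R, fderiv ℝ f (rot R y) (rot A (rot R y)) ∂μ = 0 := by
  have := hμ.isProbabilityMeasure
  have hexp (t : ℝ) : exp (t • A) ∈ SO3 := exp_mem_SO3 (by simp [hA])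
  have hf_cont : Continuous f := hf.continuous
  have hf' : Continuous fun x => fderiv ℝ f x (rot A x) :=
    (hf.continuous_fderiv one_ne_zero).clm_apply (by fun_prop)
  obtain ⟨C, hC⟩ := (isCompact_sphere (0 : E3) ‖y‖).exists_bound_of_continuousOn hf'.continuousOn
  have hbound : ∀ᵐ R ∂μ, ∀ t : ℝ, ‖fderiv ℝ f (rot (exp (t • A)) (rot R y))
      (rot A (rot (exp (t • A)) (rot R y)))‖ ≤ C :=
    hμ.ae_mem.mono fun R hR t => hC _ (by simp [norm_rot (hexp t), norm_rot hR])
  have hderiv := (hasDerivAt_integral_of_dominated_loc_of_deriv_le (μ := μ) (x₀ := (0 : ℝ))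
    (F := fun t R => f (rot (exp (t • A)) (rot R y))) univ_mem
    (.of_forall fun t => Continuous.aestronglyMeasurable (by fun_prop))
    (hμ.integrable_comp_rot (f := fun x => f (rot (exp ((0 : ℝ) • A)) x)) (by fun_prop) y)
    (by simpa [rot_one] using (hμ.integrable_comp_rot hf' y).aestronglyMeasurable)
    (hbound.mono fun R hR t _ => hR t) (integrable_const C)
    (.of_forall fun R t _ => hasDerivAt_comp_rot_exp_smul (hf.differentiable one_ne_zero) A
      (rot R y) t)).2
  simp only [hμ.integral_comp_rot_rot (hexp _) hf_cont, zero_smul, NormedSpace.exp_zero,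
    rot_one] at hderiv
  exact hderiv.unique (hasDerivAt_const 0 _)

-- The integrand is the derivative of `x ↦ φ ⟪w, x⟫ * ⟪p, x⟫` along the generator
-- `x ↦ ⟪w, x⟫ • p - ⟪p, x⟫ • w` of the rotations in the plane of `p` and `w`.
lemma integral_deriv_comp_inner_rot_eq_zero (hμ : IsHaarSO3 μ) {φ : ℝ → ℝ} (hφ : ContDiff ℝ 1 φ)
    (p w y : E3) :
    ∫ R, (deriv φ ⟪w, rot R y⟫ * (⟪w, rot R y⟫ * ⟪w, p⟫ - ⟪p, rot R y⟫ * ‖w‖ ^ 2) * ⟪p, rot R y⟫ +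
      φ ⟪w, rot R y⟫ * (⟪w, rot R y⟫ * ‖p‖ ^ 2 - ⟪p, rot R y⟫ * ⟪w, p⟫)) ∂μ = 0 := by
  have hskew : (Matrix.vecMulVec p.ofLp w.ofLp - Matrix.vecMulVec w.ofLp p.ofLp)ᵀ =
      -(Matrix.vecMulVec p.ofLp w.ofLp - Matrix.vecMulVec w.ofLp p.ofLp) := by
    simp [Matrix.transpose_vecMulVec]
  have hf : ContDiff ℝ 1 fun x : E3 => φ ⟪w, x⟫ * ⟪p, x⟫ :=
    (hφ.comp (innerSL ℝ w).contDiff).mul (innerSL ℝ p).contDiff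
  have hderiv (x v : E3) : fderiv ℝ (fun x : E3 => φ ⟪w, x⟫ * ⟪p, x⟫) x v =
      deriv φ ⟪w, x⟫ * ⟪w, v⟫ * ⟪p, x⟫ + φ ⟪w, x⟫ * ⟪p, v⟫ := by
    have h : HasFDerivAt (fun x : E3 => φ ⟪w, x⟫ * ⟪p, x⟫) _ x :=
      ((hφ.differentiable one_ne_zero ⟪w, x⟫).hasDerivAt.comp_hasFDerivAt x
        (innerSL ℝ w).hasFDerivAt).mul (innerSL ℝ p).hasFDerivAt
    simp only [h.fderiv, add_apply, smul_apply, Function.comp_apply, innerSL_apply_apply,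
      smul_eq_mul]
    ring
  rw [← hμ.integral_fderiv_rot_of_transpose_eq_neg hskew hf y]
  refine integral_congr_ae (.of_forall fun R => ?_)
  simp only [hderiv, rot_vecMulVec_sub_vecMulVec, inner_sub_right, real_inner_smul_right,
    real_inner_self_eq_norm_sq, real_inner_comm w p]

lemma integral_sq_sub_mul_deriv (hμ : IsHaarSO3 μ) {φ : ℝ → ℝ} (hφ : ContDiff ℝ 1 φ) (w y : E3) :
    ∫ R, ((‖w‖ * ‖y‖) ^ 2 - ⟪w, rot R y⟫ ^ 2) * deriv φ ⟪w, rot R y⟫ ∂μ =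
      2 * ∫ R, ⟪w, rot R y⟫ * φ ⟪w, rot R y⟫ ∂μ := by
  let e := EuclideanSpace.basisFun (Fin 3) ℝ
  have hφc : Continuous φ := hφ.continuous
  have hsum (x : E3) :
      ∑ i, (deriv φ ⟪w, x⟫ * (⟪w, x⟫ * ⟪w, e i⟫ - ⟪e i, x⟫ * ‖w‖ ^ 2) * ⟪e i, x⟫ +
        φ ⟪w, x⟫ * (⟪w, x⟫ * ‖e i‖ ^ 2 - ⟪e i, x⟫ * ⟪w, e i⟫)) =
      2 * (⟪w, x⟫ * φ ⟪w, x⟫) - ((‖w‖ * ‖x‖) ^ 2 - ⟪w, x⟫ ^ 2) * deriv φ ⟪w, x⟫ := by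
    have hwx := e.sum_inner_mul_inner w x
    have hxx := e.sum_sq_inner_right x
    simp only [Fin.sum_univ_three, e.norm_eq_one] at hwx hxx ⊢
    linear_combination (deriv φ ⟪w, x⟫ * ⟪w, x⟫ - φ ⟪w, x⟫) * hwx -
      deriv φ ⟪w, x⟫ * ‖w‖ ^ 2 * hxx
  have hzero : ∫ R, (2 * (⟪w, rot R y⟫ * φ ⟪w, rot R y⟫) -
      ((‖w‖ * ‖rot R y‖) ^ 2 - ⟪w, rot R y⟫ ^ 2) * deriv φ ⟪w, rot R y⟫) ∂μ = 0 := by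
    simp only [← hsum]
    rw [integral_finsetSum _ fun i _ => hμ.integrable_comp_rot (f := fun x =>
      deriv φ ⟪w, x⟫ * (⟪w, x⟫ * ⟪w, e i⟫ - ⟪e i, x⟫ * ‖w‖ ^ 2) * ⟪e i, x⟫ +
        φ ⟪w, x⟫ * (⟪w, x⟫ * ‖e i‖ ^ 2 - ⟪e i, x⟫ * ⟪w, e i⟫)) (by fun_prop) y]
    exact Finset.sum_eq_zero fun i _ => hμ.integral_deriv_comp_inner_rot_eq_zero hφ (e i) w y
  rw [integral_sub (hμ.integrable_comp_rot (f := fun x => 2 * (⟪w, x⟫ * φ ⟪w, x⟫)) (by fun_prop) y)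
    (hμ.integrable_comp_rot (f := fun x => ((‖w‖ * ‖x‖) ^ 2 - ⟪w, x⟫ ^ 2) * deriv φ ⟪w, x⟫)
      (by fun_prop) y), integral_const_mul, sub_eq_zero] at hzero
  rw [hzero]
  exact integral_congr_ae (hμ.ae_mem.mono fun R hR => by simp only [norm_rot hR])

lemma integral_inner_rot_pow_succ_succ (hμ : IsHaarSO3 μ) (w y : E3) (n : ℕ) :
    (n + 3) * ∫ R, ⟪w, rot R y⟫ ^ (n + 2) ∂μ =
      (n + 1) * (‖w‖ * ‖y‖) ^ 2 * ∫ R, ⟪w, rot R y⟫ ^ n ∂μ := by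
  have hint (k : ℕ) : Integrable (fun R => ⟪w, rot R y⟫ ^ k) μ :=
    hμ.integrable_comp_rot (f := fun x => ⟪w, x⟫ ^ k) (by fun_prop) y
  have h := hμ.integral_sq_sub_mul_deriv (contDiff_id.pow (n + 1)) w y
  have hleft (u : ℝ) : ((‖w‖ * ‖y‖) ^ 2 - u ^ 2) * ((n + 1) * u ^ n) =
      (n + 1) * (‖w‖ * ‖y‖) ^ 2 * u ^ n - (n + 1) * u ^ (n + 2) := by ring
  have hright (u : ℝ) : u * u ^ (n + 1) = u ^ (n + 2) := by ring
  simp only [id_eq, deriv_pow_field, Nat.cast_add, Nat.cast_one, Nat.add_sub_cancel, hleft,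
    hright] at h
  rw [integral_sub ((hint n).const_mul _) ((hint (n + 2)).const_mul _), integral_const_mul,
    integral_const_mul] at h
  linarith

lemma integral_inner_rot_pow (hμ : IsHaarSO3 μ) (w y : E3) (n : ℕ) :
    ∫ R, ⟪w, rot R y⟫ ^ n ∂μ = 2⁻¹ * ∫ t in (-1)..1, (‖w‖ * ‖y‖ * t) ^ n := by
  have := hμ.isProbabilityMeasure
  simp only [mul_pow _ _ n, intervalIntegral.integral_const_mul, integral_pow]
  induction n using Nat.twoStepInduction with
  | zero => norm_num
  | one =>
    have h := hμ.integral_sq_sub_mul_deriv (contDiff_const (c := (1 : ℝ))) w y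
    simp only [deriv_const, mul_zero, integral_zero, mul_one, zero_eq_mul, OfNat.ofNat_ne_zero,
      false_or] at h
    simp [h]
  | more n ih _ =>
    have h := hμ.integral_inner_rot_pow_succ_succ w y n
    rw [ih] at h
    refine mul_left_cancel₀ (by positivity : (n + 3 : ℝ) ≠ 0) (h.trans ?_)
    push_cast
    field_simp
    ring

/-- Archimedes' hat-box theorem. -/
theorem map_inner_rot (hμ : IsHaarSO3 μ) (w y : E3) :
    μ.map (fun R => ⟪w, rot R y⟫) = volume[|Icc (-1) 1].map (fun t : ℝ => ‖w‖ * ‖y‖ * t) := by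
  have := hμ.isProbabilityMeasure
  have hu : Measurable fun R => ⟪w, rot R y⟫ := by fun_prop
  have ht : Measurable fun t => ‖w‖ * ‖y‖ * t := by fun_prop
  refine measure_eq_of_integral_pow_eq (a := -(‖w‖ * ‖y‖)) (b := ‖w‖ * ‖y‖)
    ((ae_map_iff hu.aemeasurable measurableSet_Icc).2 ?_)
    ((ae_map_iff ht.aemeasurable measurableSet_Icc).2 ?_) fun n => ?_
  · filter_upwards [hμ.ae_mem] with R hR
    exact abs_le.1 (by simpa only [norm_rot hR] using abs_real_inner_le_norm w (rot R y))
  · filter_upwards [ProbabilityTheory.ae_cond_mem measurableSet_Icc] with t ht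
    have hc := mul_nonneg (norm_nonneg w) (norm_nonneg y)
    exact ⟨by nlinarith [ht.1], mul_le_of_le_one_right hc ht.2⟩
  · rw [integral_map hu.aemeasurable (by fun_prop), integral_map ht.aemeasurable (by fun_prop),
      hμ.integral_inner_rot_pow, integral_cond_Icc_neg_one_one]

lemma one_div_norm_sub_rot_ae_eq (hμ : IsHaarSO3 μ) (w y : E3) :
    (fun R => 1 / ‖w - rot R y‖) =ᵐ[μ]
      (fun u => 1 / √(‖w‖ ^ 2 + ‖y‖ ^ 2 - 2 * u)) ∘ fun R => ⟪w, rot R y⟫ := by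
  filter_upwards [hμ.ae_mem] with R hR
  rw [Function.comp_apply, ← Real.sqrt_sq (norm_nonneg (w - rot R y)), norm_sub_sq_real,
    norm_rot hR, sub_add_eq_add_sub]

theorem integrable_one_div_norm_sub_rot (hμ : IsHaarSO3 μ) (w y : E3) :
    Integrable (fun R => 1 / ‖w - rot R y‖) μ := by
  have hg : Measurable fun u : ℝ => 1 / √(‖w‖ ^ 2 + ‖y‖ ^ 2 - 2 * u) := by fun_prop
  refine (integrable_congr (hμ.one_div_norm_sub_rot_ae_eq w y)).2 ?_
  rw [← integrable_map_measure hg.aestronglyMeasurable (by fun_prop), hμ.map_inner_rot w y,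
    integrable_map_measure hg.aestronglyMeasurable (by fun_prop)]
  refine Integrable.smul_measure ?_ (by simp)
  rw [← IntegrableOn, integrableOn_Icc_iff_integrableOn_Ioc]
  exact (intervalIntegrable_iff_integrableOn_Ioc_of_le (by norm_num)).1
    (intervalIntegrable_one_div_sqrt (norm_nonneg w) (norm_nonneg y))

/-- Newton's shell theorem; for `w = y = 0` it reads `1 / 0 = 1 / 0`. -/
theorem integral_one_div_norm_sub_rot (hμ : IsHaarSO3 μ) (w y : E3) :
    ∫ R, 1 / ‖w - rot R y‖ ∂μ = 1 / max ‖w‖ ‖y‖ := by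
  have hg : Measurable fun u : ℝ => 1 / √(‖w‖ ^ 2 + ‖y‖ ^ 2 - 2 * u) := by fun_prop
  have hu : Measurable fun R => ⟪w, rot R y⟫ := by fun_prop
  rw [integral_congr_ae (hμ.one_div_norm_sub_rot_ae_eq w y)]
  calc ∫ R, 1 / √(‖w‖ ^ 2 + ‖y‖ ^ 2 - 2 * ⟪w, rot R y⟫) ∂μ
      = ∫ u, 1 / √(‖w‖ ^ 2 + ‖y‖ ^ 2 - 2 * u) ∂(μ.map fun R => ⟪w, rot R y⟫) :=
        (integral_map hu.aemeasurable hg.aestronglyMeasurable).symm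
    _ = 2⁻¹ * ∫ t in (-1)..1, 1 / √(‖w‖ ^ 2 + ‖y‖ ^ 2 - 2 * (‖w‖ * ‖y‖ * t)) := by
        rw [hμ.map_inner_rot, integral_map (by fun_prop) hg.aestronglyMeasurable,
          integral_cond_Icc_neg_one_one]
    _ = 1 / max ‖w‖ ‖y‖ := by
        rw [integral_one_div_sqrt (norm_nonneg w) (norm_nonneg y)]
        ring

lemma integral_one_div_norm_rot_add_sub_rot_add (hμ : IsHaarSO3 μ)
    {R : Matrix (Fin 3) (Fin 3) ℝ} (hR : R ∈ SO3) {x y z z' : E3} (h : ‖x‖ + ‖y‖ ≤ ‖z - z'‖) :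
    ∫ R', 1 / ‖(rot R x + z) - (rot R' y + z')‖ ∂μ = 1 / ‖(z' - z) - rot R x‖ := by
  have hy : ‖y‖ ≤ ‖(z - z') + rot R x‖ := by
    have := norm_sub_le_norm_add (z - z') (rot R x)
    rw [norm_rot hR] at this
    linarith
  have hsub (R' : Matrix (Fin 3) (Fin 3) ℝ) :
      (rot R x + z) - (rot R' y + z') = ((z - z') + rot R x) - rot R' y := by abel
  have hneg : (z' - z) - rot R x = -((z - z') + rot R x) := by abel
  simp only [hsub, hμ.integral_one_div_norm_sub_rot, max_eq_left hy, hneg, norm_neg]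

theorem integrable_one_div_norm_rot_add_sub_rot_add (hμ : IsHaarSO3 μ) {x y z z' : E3}
    (h : ‖x‖ + ‖y‖ ≤ ‖z - z'‖) :
    Integrable (fun p : Matrix (Fin 3) (Fin 3) ℝ × Matrix (Fin 3) (Fin 3) ℝ =>
      1 / ‖(rot p.1 x + z) - (rot p.2 y + z')‖) (μ.prod μ) := by
  have := hμ.isProbabilityMeasure
  have hmeas : Measurable fun p : Matrix (Fin 3) (Fin 3) ℝ × Matrix (Fin 3) (Fin 3) ℝ =>
      1 / ‖(rot p.1 x + z) - (rot p.2 y + z')‖ := by fun_prop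
  refine (integrable_prod_iff hmeas.aestronglyMeasurable).2 ⟨.of_forall fun R => ?_, ?_⟩
  · simpa only [sub_add_eq_sub_sub_swap] using
      hμ.integrable_one_div_norm_sub_rot (rot R x + z - z') y
  · refine (hμ.integrable_one_div_norm_sub_rot (z' - z) x).congr (hμ.ae_mem.mono fun R hR => ?_)
    simp only [norm_div, norm_one, norm_norm, hμ.integral_one_div_norm_rot_add_sub_rot_add hR h]

theorem integral_integral_one_div_norm_rot_add_sub_rot_add (hμ : IsHaarSO3 μ) {x y z z' : E3}
    (h : ‖x‖ + ‖y‖ ≤ ‖z - z'‖) :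
    ∫ R, ∫ R', 1 / ‖(rot R x + z) - (rot R' y + z')‖ ∂μ ∂μ = 1 / ‖z - z'‖ := by
  have hx : ‖x‖ ≤ ‖z' - z‖ := by
    rw [norm_sub_rev]
    linarith [norm_nonneg y]
  rw [integral_congr_ae (hμ.ae_mem.mono fun R hR =>
      hμ.integral_one_div_norm_rot_add_sub_rot_add hR h),
    hμ.integral_one_div_norm_sub_rot, max_eq_left hx, norm_sub_rev]

end IsHaarSO3

end Rotations

lemma setIntegral_rigidImage {R : Matrix (Fin 3) (Fin 3) ℝ} (hR : R ∈ SO3) (τ : E3) (S : Set E3)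
    (f : E3 → ℝ) : ∫ x in rigidImage R τ S, f x = ∫ x in S, f (rot R x + τ) := by
  let e : E3 ≃ₗᵢ[ℝ] E3 :=
    LinearIsometry.toLinearIsometryEquiv
      ⟨(Matrix.toEuclideanCLM (n := Fin 3) (𝕜 := ℝ) R).toLinearMap, norm_rot hR⟩ rfl
  exact ((measurePreserving_add_right volume τ).comp e.measurePreserving).setIntegral_image_emb
    ((measurableEmbedding_addRight τ).comp e.toHomeomorph.measurableEmbedding) f S

theorem rotation_average_interaction_general {μ : Measure (Matrix (Fin 3) (Fin 3) ℝ)}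
    (hμ : IsHaarSO3 μ) {ν ν' : Measure E3} [IsFiniteMeasure ν] [IsFiniteMeasure ν'] {r r' : ℝ}
    (hν : ∀ᵐ x ∂ν, x ∈ ball 0 r) (hν' : ∀ᵐ y ∂ν', y ∈ ball 0 r')
    {z z' : E3} (hsep : r + r' ≤ ‖z - z'‖) :
    ∫ R, ∫ R', ∫ x, ∫ y, 1 / ‖(rot R x + z) - (rot R' y + z')‖ ∂ν' ∂ν ∂μ ∂μ =
      ν.real univ * ν'.real univ / ‖z - z'‖ := by
  have := hμ.isProbabilityMeasure
  have hnorm : ∀ᵐ q ∂ν.prod ν', ‖q.1‖ + ‖q.2‖ ≤ ‖z - z'‖ := by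
    filter_upwards [Measure.quasiMeasurePreserving_fst.ae hν,
      Measure.quasiMeasurePreserving_snd.ae hν'] with q hx hy
    rw [mem_ball_zero_iff] at hx hy
    linarith
  have hint_pair : ∀ᵐ q ∂ν.prod ν', Integrable
      (fun p : Matrix (Fin 3) (Fin 3) ℝ × Matrix (Fin 3) (Fin 3) ℝ =>
        1 / ‖(rot p.1 q.1 + z) - (rot p.2 q.2 + z')‖) (μ.prod μ) :=
    hnorm.mono fun _ => hμ.integrable_one_div_norm_rot_add_sub_rot_add
  have hpair : ∀ᵐ q ∂ν.prod ν', ∫ p, 1 / ‖(rot p.1 q.1 + z) - (rot p.2 q.2 + z')‖ ∂μ.prod μ =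
      1 / ‖z - z'‖ := by
    filter_upwards [hnorm, hint_pair] with q hq hint_q
    rw [integral_prod _ hint_q, hμ.integral_integral_one_div_norm_rot_add_sub_rot_add hq]
  have hmeas : Measurable
      fun p : (Matrix (Fin 3) (Fin 3) ℝ × Matrix (Fin 3) (Fin 3) ℝ) × E3 × E3 =>
        1 / ‖(rot p.1.1 p.2.1 + z) - (rot p.1.2 p.2.2 + z')‖ := by fun_prop
  have hint := integrable_prod_of_nonneg_of_ae_integral_eq hmeas.aestronglyMeasurable
    (fun _ => by positivity) hint_pair hpair
  rw [integral_integral_integral_integral_swap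
      (K := fun R R' x y => 1 / ‖(rot R x + z) - (rot R' y + z')‖) hint,
    integral_congr_ae hpair, integral_const, ← univ_prod_univ, measureReal_prod_prod, smul_eq_mul,
    mul_one_div]

/-- **Newton's theorem for rotation averages**: for `Ω ⊆ B(0,r)`, `Ω' ⊆ B(0,r')` and centers
with `|z-z'| ≥ r+r'`, the doubly rotation-averaged Coulomb interaction between `z+RΩ` and
`z'+R'Ω'` equals `|Ω||Ω'|/|z-z'|`. -/
theorem rotation_average_interaction (μ : Measure (Matrix (Fin 3) (Fin 3) ℝ))
    (hμ : IsHaarSO3 μ) (r r' : ℝ) (Ω Ω' : Set E3)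
    (hΩm : MeasurableSet Ω) (hΩ'm : MeasurableSet Ω')
    (hΩ : Ω ⊆ ball 0 r) (hΩ' : Ω' ⊆ ball 0 r')
    (z z' : E3) (hsep : r + r' ≤ ‖z - z'‖) :
    (∫ R, (∫ R', (∫ x in rigidImage R z Ω, ∫ y in rigidImage R' z' Ω', 1 / ‖x - y‖) ∂μ) ∂μ)
      = vol Ω * vol Ω' / ‖z - z'‖ := by
  have : IsFiniteMeasure (volume.restrict Ω) :=
    isFiniteMeasure_restrict.2 (measure_ne_top_of_subset hΩ measure_ball_lt_top.ne)
  have : IsFiniteMeasure (volume.restrict Ω') :=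
    isFiniteMeasure_restrict.2 (measure_ne_top_of_subset hΩ' measure_ball_lt_top.ne)
  calc ∫ R, (∫ R', (∫ x in rigidImage R z Ω, ∫ y in rigidImage R' z' Ω', 1 / ‖x - y‖) ∂μ) ∂μ
      = ∫ R, (∫ R', (∫ x in Ω, ∫ y in Ω', 1 / ‖(rot R x + z) - (rot R' y + z')‖) ∂μ) ∂μ :=
        integral_congr_ae <| hμ.ae_mem.mono fun R hR => integral_congr_ae <|
          hμ.ae_mem.mono fun R' hR' => by simp only [setIntegral_rigidImage, hR, hR']
    _ = vol Ω * vol Ω' / ‖z - z'‖ := by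
        simpa only [vol, Measure.real, Measure.restrict_apply_univ] using
          rotation_average_interaction_general hμ (ae_restrict_of_forall_mem hΩm hΩ)
            (ae_restrict_of_forall_mem hΩ'm hΩ') hsep

end
end
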